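/- For every element U of the Clifford+T group, the minimum number of occurrences of the letter T over all words in the alphabet {H, S, T} whose product equals U is exactly half the least denominator exponent of Û₊₊ (in particular, this least denominator exponent is even). -/

import Mathlib

open Matrix Complex

noncomputable section

/-- ω = exp(2πi/3), a primitive third root of unity. -/
def ω : ℂ := exp (2 * Real.pi * I / 3)

/-- ζ = exp(2πi/9), a primitive ninth root of unity. -/
def ζ : ℂ := exp (2 * Real.pi * I / 9)

/-- The qutrit Pauli X matrix. -/
def Xmat : Matrix (Fin 3) (Fin 3) ℂ := !![0,0,1; 1,0,0; 0,1,0]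

/-- The qutrit Pauli Z matrix. -/
def Zmat : Matrix (Fin 3) (Fin 3) ℂ := !![1,0,0; 0,ω,0; 0,0,ω^2]

/-- The qutrit Hadamard matrix H = (1/(i√3))·[[1,1,1],[1,ω,ω²],[1,ω²,ω]]. -/
def Hmat : Matrix (Fin 3) (Fin 3) ℂ :=
  (I * (Real.sqrt 3 : ℂ))⁻¹ • !![1,1,1; 1,ω,ω^2; 1,ω^2,ω]

/-- The qutrit phase matrix S = ζ⁸·diag(1,1,ω). -/
def Smat : Matrix (Fin 3) (Fin 3) ℂ := ζ^8 • !![1,0,0; 0,1,0; 0,0,ω]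

/-- The qutrit T matrix T = diag(1,ζ,ζ⁸). -/
def Tmat : Matrix (Fin 3) (Fin 3) ℂ := !![1,0,0; 0,ζ,0; 0,0,ζ^8]

lemma omega_ne_zero : ω ≠ 0 := Complex.exp_ne_zero _
lemma zeta_ne_zero : ζ ≠ 0 := Complex.exp_ne_zero _

lemma omega_im_pos : 0 < ω.im := by
  have h : ω = Complex.exp ((2 * Real.pi / 3 : ℝ) * I) := by
    rw [ω]; push_cast; ring_nf
  rw [h, Complex.exp_ofReal_mul_I_im]
  apply Real.sin_pos_of_pos_of_lt_pi
  · positivity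
  · nlinarith [Real.pi_pos]

lemma omega_ne_one : ω ≠ 1 := by
  intro h
  have := omega_im_pos
  rw [h] at this
  simp at this

lemma omega_cube : ω ^ 3 = 1 := by
  rw [ω, ← Complex.exp_nat_mul]
  rw [show (3:ℕ) * (2 * Real.pi * I / 3) = 2 * Real.pi * I by push_cast; ring]
  exact Complex.exp_two_pi_mul_I

lemma detX : Xmat.det ≠ 0 := by
  simp [Xmat, Matrix.det_fin_three]

lemma detZ : Zmat.det ≠ 0 := by
  simp [Zmat, Matrix.det_fin_three, omega_ne_zero]

lemma detS : Smat.det ≠ 0 := by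
  simp [Smat, Matrix.det_fin_three, omega_ne_zero, zeta_ne_zero]

lemma detT : Tmat.det ≠ 0 := by
  simp [Tmat, Matrix.det_fin_three, zeta_ne_zero]

lemma detH : Hmat.det ≠ 0 := by
  rw [Hmat, Matrix.det_smul]
  apply mul_ne_zero
  · apply pow_ne_zero
    apply inv_ne_zero
    apply mul_ne_zero Complex.I_ne_zero
    simp [Complex.ofReal_ne_zero]
  · rw [Matrix.det_fin_three]
    simp [Matrix.vecHead, Matrix.vecTail]
    intro h
    have h3 : ω ^ 3 = 1 := omega_cube
    have key : 3 * ω * (ω - 1) = 0 := by linear_combination h + ω * h3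
    rcases mul_eq_zero.mp key with h' | h'
    · rcases mul_eq_zero.mp h' with h'' | h''
      · norm_num at h''
      · exact omega_ne_zero h''
    · exact omega_ne_one (by linear_combination h')

/-- X as an element of GL(3, ℂ). -/
def Xg : GL (Fin 3) ℂ := Matrix.GeneralLinearGroup.mkOfDetNeZero Xmat detX

/-- Z as an element of GL(3, ℂ). -/
def Zg : GL (Fin 3) ℂ := Matrix.GeneralLinearGroup.mkOfDetNeZero Zmat detZ

/-- H as an element of GL(3, ℂ). -/
def Hg : GL (Fin 3) ℂ := Matrix.GeneralLinearGroup.mkOfDetNeZero Hmat detH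

/-- S as an element of GL(3, ℂ). -/
def Sg : GL (Fin 3) ℂ := Matrix.GeneralLinearGroup.mkOfDetNeZero Smat detS

/-- T as an element of GL(3, ℂ). -/
def Tg : GL (Fin 3) ℂ := Matrix.GeneralLinearGroup.mkOfDetNeZero Tmat detT

/-- The Clifford group 𝒞: the subgroup of GL(3,ℂ) generated by H and S. -/
def Cliff : Subgroup (GL (Fin 3) ℂ) := Subgroup.closure {Hg, Sg}

/-- The Clifford+T group: the subgroup of GL(3,ℂ) generated by H, S and T. -/
def CliffT : Subgroup (GL (Fin 3) ℂ) := Subgroup.closure {Hg, Sg, Tg}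

/-- The subgroup 𝒮 of GL(3,ℂ) generated by S and X. -/
def Sgrp : Subgroup (GL (Fin 3) ℂ) := Subgroup.closure {Sg, Xg}

/-- Letters of words over the alphabet {H, S, T}. -/
inductive Letter : Type
  | H : Letter
  | S : Letter
  | T : Letter
  deriving DecidableEq

/-- The gate associated to a letter. -/
def Letter.g : Letter → GL (Fin 3) ℂ
  | .H => Hg
  | .S => Sg
  | .T => Tg

/-- The product of the letters of a word. -/
def wordProd (w : List Letter) : GL (Fin 3) ℂ := (w.map Letter.g).prod

/-- The allowed prefixes of a canonical form: ε, T, H²T. -/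
def Prefixes : Set (List Letter) := {[], [.T], [.H, .H, .T]}

/-- The allowed syllables of a canonical form: HT, H³T, SHT, SH³T, S²HT, S²H³T. -/
def Syllables : Set (List Letter) :=
  {[.H, .T], [.H, .H, .H, .T], [.S, .H, .T],
   [.S, .H, .H, .H, .T], [.S, .S, .H, .T], [.S, .S, .H, .H, .H, .T]}

/-- The T-count of a canonical form with prefix `p` and syllable list `ss`:
`k` if the prefix is empty and `k+1` otherwise, where `k` is the number of syllables. -/
def TCount (p : List Letter) (ss : List (List Letter)) : ℕ :=
  ss.length + (if p = [] then 0 else 1)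

/-- P₊ = (P + P²)/√6. -/
def Pplus (P : Matrix (Fin 3) (Fin 3) ℂ) : Matrix (Fin 3) (Fin 3) ℂ :=
  ((Real.sqrt 6 : ℂ))⁻¹ • (P + P ^ 2)

/-- P₋ = i(P − P²)/√6. -/
def Pminus (P : Matrix (Fin 3) (Fin 3) ℂ) : Matrix (Fin 3) (Fin 3) ℂ :=
  (I * ((Real.sqrt 6 : ℂ))⁻¹) • (P - P ^ 2)

/-- The ordered tuple (Q₁, …, Q₈) = (Z₊, X₊, (XZ)₊, (XZ²)₊, Z₋, X₋, (XZ)₋, (XZ²)₋). -/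
def Q : Fin 8 → Matrix (Fin 3) (Fin 3) ℂ :=
  ![Pplus Zmat, Pplus Xmat, Pplus (Xmat * Zmat), Pplus (Xmat * Zmat ^ 2),
    Pminus Zmat, Pminus Xmat, Pminus (Xmat * Zmat), Pminus (Xmat * Zmat ^ 2)]

/-- The adjoint representation Û of U, the 8×8 real matrix with
entries Û_{ij} = tr(Qᵢ U Qⱼ U†). -/
def adj (U : Matrix (Fin 3) (Fin 3) ℂ) : Matrix (Fin 8) (Fin 8) ℝ :=
  Matrix.of fun i j => (Matrix.trace (Q i * U * Q j * Uᴴ)).re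

/-- The top-left 4×4 quadrant Û₊₊. -/
def blockPP (A : Matrix (Fin 8) (Fin 8) ℝ) : Matrix (Fin 4) (Fin 4) ℝ :=
  Matrix.of fun i j => A ⟨i.val, by omega⟩ ⟨j.val, by omega⟩

/-- The top-right 4×4 quadrant Û₊₋. -/
def blockPM (A : Matrix (Fin 8) (Fin 8) ℝ) : Matrix (Fin 4) (Fin 4) ℝ :=
  Matrix.of fun i j => A ⟨i.val, by omega⟩ ⟨j.val + 4, by omega⟩

/-- The bottom-left 4×4 quadrant Û₋₊. -/
def blockMP (A : Matrix (Fin 8) (Fin 8) ℝ) : Matrix (Fin 4) (Fin 4) ℝ :=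
  Matrix.of fun i j => A ⟨i.val + 4, by omega⟩ ⟨j.val, by omega⟩

/-- The bottom-right 4×4 quadrant Û₋₋. -/
def blockMM (A : Matrix (Fin 8) (Fin 8) ℝ) : Matrix (Fin 4) (Fin 4) ℝ :=
  Matrix.of fun i j => A ⟨i.val + 4, by omega⟩ ⟨j.val + 4, by omega⟩

/-- α = sin(2π/9). -/
def αR : ℝ := Real.sin (2 * Real.pi / 9)

/-- The ring ℤ[α]: the subring of ℝ generated by 1/2 and α. -/
def Zα : Subring ℝ := Subring.closure {1/2, αR}

/-- The ring ℤ[1/2, 1/α]: the subring of ℝ generated by 1/2, α and α⁻¹. -/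
def Zhα : Subring ℝ := Subring.closure {1/2, αR, αR⁻¹}

lemma alpha_mem_Zα : αR ∈ Zα := Subring.subset_closure (by simp)

/-!
Let `B` be the group generated by `S`, `X` and `H²`. Since `T` normalizes `⟨S, X⟩`, `T³ = Z` and
`T H² T = H²`, a product `T b T` with `b ∈ B` can be written with at most one `T`. Hence a word
with `k` letters `T` has a normal form `c₀ T c₁ T ⋯ T cₘ` with `m ≤ k`, Clifford gates `cᵢ` and
`c₁, …, cₘ₋₁ ∉ B`; by the Bruhat decomposition of the Clifford group these lie in `B H B`.

It remains to see that the least denominator exponent is `2m` for every normal form of `U`, so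
that `m` is determined by `U`. The entries of `Û₊₊` are the real parts of the coordinates of
`U (P + P†) U†` in the Pauli matrices. Modulo `α` for the real and `α³` for the imaginary parts,
Clifford gates only permute the four relevant coordinates, up to the sign of the imaginary parts.
The gate `T` turns three of them into `1 / (i ζ √3)` times their sum, where `α³ / √3` is a unit of
`ℤ[α]`, plus terms without new denominators. After a gate in `B H B` this sum is, modulo `α`,
twice the leading term left by the previous `T`, and its imaginary part is divisible by `α³`. As
`2` is a unit, each `T` multiplies the denominator by exactly `α²`.
-/

section GroupTheory

variable {G : Type*} [Group G]

lemma closure_induction_left_of_isOfFinOrder {s : Set G} (hs : ∀ x ∈ s, IsOfFinOrder x)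
    {p : G → Prop} (one : p 1) (mul_left : ∀ x ∈ s, ∀ y, p y → p (x * y)) {g : G}
    (hg : g ∈ Subgroup.closure s) : p g :=
  Submonoid.closure_induction_left (motive := fun g _ => p g) one
    (fun x hx y _ => mul_left x hx y)
    (by rwa [← Subgroup.closure_toSubmonoid_of_isOfFinOrder hs] : g ∈ Submonoid.closure s)

lemma mem_normalizer_closure_of_isOfFinOrder {s : Set G} {g : G} (hg : IsOfFinOrder g)
    (h : ∀ x ∈ s, g * x * g⁻¹ ∈ Subgroup.closure s) :
    g ∈ Subgroup.normalizer (Subgroup.closure s : Set G) := by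
  have hconj : ∀ x ∈ Subgroup.closure s, g * x * g⁻¹ ∈ Subgroup.closure s :=
    (Subgroup.closure_le ((Subgroup.closure s).comap (MulAut.conj g).toMonoidHom)).2 h
  have hpow (n : ℕ) :
      ∀ x ∈ Subgroup.closure s, g ^ n * x * (g ^ n)⁻¹ ∈ Subgroup.closure s := by
    induction n with
    | zero => simp
    | succ n ih => exact fun x hx => by simpa [pow_succ', mul_assoc] using hconj _ (ih x hx)
  obtain ⟨n, hn : g ^ n = g⁻¹⟩ :=
    hg.mem_powers_iff_mem_zpowers.2 (inv_mem (Subgroup.mem_zpowers g))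
  refine Subgroup.mem_normalizer_iff.2 fun x => ⟨hconj x, fun hx => ?_⟩
  simpa [hn, mul_assoc] using hpow n _ hx

lemma mul_mem_doubleCoset_of_mem {B : Subgroup G} {h b x : G} (hb : b ∈ B)
    (hx : x ∈ DoubleCoset.doubleCoset h (B : Set G) B) :
    b * x ∈ DoubleCoset.doubleCoset h (B : Set G) B := by
  obtain ⟨b₁, hb₁, b₂, hb₂, rfl⟩ := DoubleCoset.mem_doubleCoset.1 hx
  exact DoubleCoset.mem_doubleCoset.2
    ⟨b * b₁, mul_mem hb hb₁, b₂, hb₂, by simp only [mul_assoc]⟩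

lemma doubleCoset_mul_mem_of_mem {B : Subgroup G} {h b x : G} (hb : b ∈ B)
    (hx : x ∈ DoubleCoset.doubleCoset h (B : Set G) B) :
    x * b ∈ DoubleCoset.doubleCoset h (B : Set G) B := by
  obtain ⟨b₁, hb₁, b₂, hb₂, rfl⟩ := DoubleCoset.mem_doubleCoset.1 hx
  exact DoubleCoset.mem_doubleCoset.2
    ⟨b₁, hb₁, b₂ * b, mul_mem hb₂ hb, by simp only [mul_assoc]⟩

/-- A Bruhat decomposition with a two-element Weyl group. -/
lemma closure_subset_union_doubleCoset {B : Subgroup G} {h : G}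
    (hB : ∀ b ∈ B, h * b * h ∈ (B : Set G) ∪ DoubleCoset.doubleCoset h B B)
    {s : Set G} (hs : ∀ x ∈ s, IsOfFinOrder x) (hsB : s ⊆ insert h (B : Set G)) :
    (Subgroup.closure s : Set G) ⊆ (B : Set G) ∪ DoubleCoset.doubleCoset h B B := by
  intro g hg
  refine closure_induction_left_of_isOfFinOrder
    (p := fun g => g ∈ (B : Set G) ∪ DoubleCoset.doubleCoset h B B) hs (.inl (one_mem B)) ?_ hg
  intro x hx y hy
  rcases hsB hx with rfl | hxB
  · rcases hy with hy | hy
    · exact .inr (doubleCoset_mul_mem_of_mem hy (DoubleCoset.mem_doubleCoset_self _ _ _))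
    · obtain ⟨b₁, hb₁, b₂, hb₂, rfl⟩ := DoubleCoset.mem_doubleCoset.1 hy
      rw [show x * (b₁ * x * b₂) = x * b₁ * x * b₂ by simp only [mul_assoc]]
      exact (hB b₁ hb₁).imp (mul_mem · hb₂) (doubleCoset_mul_mem_of_mem hb₂)
  · exact hy.imp (mul_mem hxB) (mul_mem_doubleCoset_of_mem hxB)

/-- `IsReducedProduct B C t m g` says that `g = t c₁ t c₂ ⋯ t cₘ` where every `cᵢ` lies in `C`
and none of `c₁, …, cₘ₋₁` lies in `B`. In these products no two neighbouring `t`'s can be merged by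
pushing an element of `B` out of the way. -/
inductive IsReducedProduct (B C : Subgroup G) (t : G) : ℕ → G → Prop
  | one : IsReducedProduct B C t 0 1
  | step {m : ℕ} {c u : G} (hc : c ∈ C) (hcB : m ≠ 0 → c ∉ B)
      (hu : IsReducedProduct B C t m u) : IsReducedProduct B C t (m + 1) (t * (c * u))

/-- `HasNormalForm B C t m g` says that `g = c₀ t c₁ t c₂ ⋯ t cₘ` with every `cᵢ` in `C` and none
of `c₁, …, cₘ₋₁` in `B`. -/
def HasNormalForm (B C : Subgroup G) (t : G) (m : ℕ) (g : G) : Prop :=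
  ∃ c ∈ C, ∃ u, IsReducedProduct B C t m u ∧ g = c * u

variable {B C : Subgroup G} {t : G} {m : ℕ} {g : G}

lemma hasNormalForm_one : HasNormalForm B C t 0 1 :=
  ⟨1, one_mem C, 1, .one, (one_mul 1).symm⟩

lemma HasNormalForm.mul_left {c : G} (hc : c ∈ C) (hg : HasNormalForm B C t m g) :
    HasNormalForm B C t m (c * g) := by
  obtain ⟨d, hd, u, hu, rfl⟩ := hg
  exact ⟨c * d, mul_mem hc hd, u, hu, (mul_assoc c d u).symm⟩

lemma IsReducedProduct.hasNormalForm (hg : IsReducedProduct B C t m g) : HasNormalForm B C t m g :=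
  ⟨1, one_mem C, g, hg, (one_mul g).symm⟩

lemma HasNormalForm.exists_mul_left_generator (hBC : B ≤ C)
    (ht : ∀ b ∈ B, t * b * t ∈ C ∨ ∃ c ∈ C, ∃ b' ∈ B, t * b * t = c * t * b')
    (hg : HasNormalForm B C t m g) : ∃ m' ≤ m + 1, HasNormalForm B C t m' (t * g) := by
  obtain ⟨c, hc, u, hu, rfl⟩ := hg
  by_cases hcB : m ≠ 0 → c ∉ B
  · exact ⟨m + 1, le_rfl, (IsReducedProduct.step hc hcB hu).hasNormalForm⟩
  push Not at hcB
  obtain ⟨hm, hcB⟩ := hcB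
  cases hu with
  | one => exact absurd rfl hm
  | @step k d v hd hdB hv =>
    have hmerge : t * (c * (t * (d * v))) = t * c * t * (d * v) := by simp only [mul_assoc]
    rcases ht c hcB with htct | ⟨c', hc', b', hb', htct⟩
    · rw [hmerge]
      exact ⟨k, by lia, HasNormalForm.mul_left htct ⟨d, hd, v, hv, rfl⟩⟩
    · have hb'd : k ≠ 0 → b' * d ∉ B := fun hk h => hdB hk ((B.mul_mem_cancel_left hb').1 h)
      refine ⟨k + 1, by lia, c', hc', _, .step (mul_mem (hBC hb') hd) hb'd hv, ?_⟩
      rw [hmerge, htct]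
      simp only [mul_assoc]

end GroupTheory

section Constants

lemma zeta_eq_exp : ζ = Complex.exp ((2 * Real.pi / 9 : ℝ) * I) := by
  rw [ζ]
  push_cast
  ring_nf

lemma omega_eq_zeta_pow : ω = ζ ^ 3 := by
  rw [ω, ζ, ← Complex.exp_nat_mul]
  push_cast
  ring_nf

lemma zeta_pow_nine : ζ ^ 9 = 1 := by
  rw [← omega_cube, omega_eq_zeta_pow, ← pow_mul]

lemma zeta_cyclotomic : ζ ^ 6 + ζ ^ 3 + 1 = 0 := by
  have h : (ω - 1) * (ω ^ 2 + ω + 1) = 0 := by linear_combination omega_cube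
  have h' := (mul_eq_zero.1 h).resolve_left (sub_ne_zero.2 omega_ne_one)
  rw [omega_eq_zeta_pow] at h'
  linear_combination h'

lemma star_zeta : star ζ = ζ ^ 8 := by
  have h : star ζ = ζ⁻¹ := by
    rw [Complex.inv_eq_conj (by rw [zeta_eq_exp, Complex.norm_exp_ofReal_mul_I])]
    rfl
  rw [h]
  exact inv_eq_of_mul_eq_one_right (by rw [← pow_succ', zeta_pow_nine])

lemma zeta_pow_three_eq : ζ ^ 3 = -(1 / 2) + √3 / 2 * I := by
  have hcos : Real.cos (2 * Real.pi / 3) = -(1 / 2) := by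
    rw [show 2 * Real.pi / 3 = Real.pi - Real.pi / 3 by ring, Real.cos_pi_sub,
      Real.cos_pi_div_three]
  have hsin : Real.sin (2 * Real.pi / 3) = √3 / 2 := by
    rw [show 2 * Real.pi / 3 = Real.pi - Real.pi / 3 by ring, Real.sin_pi_sub,
      Real.sin_pi_div_three]
  rw [zeta_eq_exp, ← Complex.exp_nat_mul,
    show ((3 : ℕ) : ℂ) * ((2 * Real.pi / 9 : ℝ) * I) = (2 * Real.pi / 3 : ℝ) * I by
      push_cast; ring,
    Complex.exp_mul_I, ← Complex.ofReal_cos, ← Complex.ofReal_sin, hcos, hsin]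
  push_cast
  ring

lemma inv_I_mul_sqrt_three : (I * (√3 : ℂ))⁻¹ = -(1 + 2 * ζ ^ 3) / 3 := by
  rw [show I * (√3 : ℂ) = 1 + 2 * ζ ^ 3 by linear_combination -2 * zeta_pow_three_eq]
  exact inv_eq_of_mul_eq_one_right (by linear_combination (-4 / 3) * zeta_cyclotomic)

end Constants

section GateRelations

lemma Hmat_eq : Hmat = (-(1 + 2 * ζ ^ 3) / 3) • !![1,1,1; 1,ζ^3,ζ^6; 1,ζ^6,ζ^3] := by
  rw [Hmat, inv_I_mul_sqrt_three, omega_eq_zeta_pow, ← pow_mul]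

lemma Smat_eq : Smat = !![ζ^8,0,0; 0,ζ^8,0; 0,0,ζ^2] := by
  rw [Smat, omega_eq_zeta_pow]
  simp only [smul_of, smul_cons, smul_empty, smul_eq_mul]
  congrm !![?_, ?_, ?_; ?_, ?_, ?_; ?_, ?_, ?_] <;> grind [zeta_pow_nine]

lemma Zmat_eq : Zmat = !![1,0,0; 0,ζ^3,0; 0,0,ζ^6] := by
  rw [Zmat, omega_eq_zeta_pow, ← pow_mul]

lemma Hmat_sq : Hmat ^ 2 = !![-1,0,0; 0,0,-1; 0,-1,0] := by
  simp only [sq, Hmat_eq, mul_fin_three, smul_of, smul_cons, smul_empty,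
    smul_eq_mul]
  congrm !![?_, ?_, ?_; ?_, ?_, ?_; ?_, ?_, ?_] <;> grind [zeta_cyclotomic]

lemma Smat_pow (n : ℕ) :
    Smat ^ n = !![(ζ ^ 8) ^ n, 0, 0; 0, (ζ ^ 8) ^ n, 0; 0, 0, (ζ ^ 2) ^ n] := by
  induction n with
  | zero => simp [one_fin_three]
  | succ n ih =>
    rw [pow_succ, ih, Smat_eq, mul_fin_three]
    congrm !![?_, ?_, ?_; ?_, ?_, ?_; ?_, ?_, ?_] <;> ring

lemma Zmat_sq : Zmat ^ 2 = !![1,0,0; 0,ζ^6,0; 0,0,ζ^3] := by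
  rw [sq, Zmat_eq, mul_fin_three]
  congrm !![?_, ?_, ?_; ?_, ?_, ?_; ?_, ?_, ?_] <;> grind [zeta_pow_nine]

lemma Hg_pow_four : Hg ^ 4 = 1 := by
  refine Units.ext ?_
  change Hmat ^ 4 = 1
  rw [pow_mul Hmat 2 2, Hmat_sq, sq, mul_fin_three, one_fin_three]
  congrm !![?_, ?_, ?_; ?_, ?_, ?_; ?_, ?_, ?_] <;> ring

lemma Sg_pow_nine : Sg ^ 9 = 1 := by
  refine Units.ext ?_
  change Smat ^ 9 = 1
  simp only [Smat_pow, one_fin_three, ← pow_mul, mul_comm _ 9]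
  simp only [pow_mul, zeta_pow_nine, one_pow]

lemma Xg_pow_three : Xg ^ 3 = 1 := by
  refine Units.ext ?_
  change Xmat ^ 3 = 1
  rw [pow_three, Xmat, mul_fin_three, mul_fin_three, one_fin_three]
  congrm !![?_, ?_, ?_; ?_, ?_, ?_; ?_, ?_, ?_] <;> ring

lemma Tg_pow_three : Tg ^ 3 = Zg := by
  refine Units.ext ?_
  change Tmat ^ 3 = Zmat
  rw [pow_three, Tmat, Zmat_eq, mul_fin_three, mul_fin_three]
  congrm !![?_, ?_, ?_; ?_, ?_, ?_; ?_, ?_, ?_] <;> grind [zeta_pow_nine]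

lemma Zg_pow_three : Zg ^ 3 = 1 := by
  refine Units.ext ?_
  change Zmat ^ 3 = 1
  rw [pow_succ, Zmat_sq, Zmat_eq, mul_fin_three, one_fin_three]
  congrm !![?_, ?_, ?_; ?_, ?_, ?_; ?_, ?_, ?_] <;> grind [zeta_pow_nine]

lemma commute_Tg_Sg : Commute Tg Sg := by
  refine Units.ext ?_
  change Tmat * Smat = Smat * Tmat
  rw [Tmat, Smat_eq, mul_fin_three, mul_fin_three]
  congrm !![?_, ?_, ?_; ?_, ?_, ?_; ?_, ?_, ?_] <;> ring

lemma commute_Zg_Sg : Commute Zg Sg :=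
  Tg_pow_three ▸ commute_Tg_Sg.pow_left 3

lemma Sg_mul_Tg_mul_Xg : Sg * (Tg * Xg) = Xg * Tg := by
  refine Units.ext ?_
  change Smat * (Tmat * Xmat) = Xmat * Tmat
  rw [Smat_eq, Tmat, Xmat, mul_fin_three, mul_fin_three, mul_fin_three]
  congrm !![?_, ?_, ?_; ?_, ?_, ?_; ?_, ?_, ?_] <;> grind [zeta_pow_nine]

lemma Tg_mul_Hg_sq_mul_Tg : Tg * Hg ^ 2 * Tg = Hg ^ 2 := by
  refine Units.ext ?_
  change Tmat * Hmat ^ 2 * Tmat = Hmat ^ 2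
  rw [Hmat_sq, Tmat, mul_fin_three, mul_fin_three]
  congrm !![?_, ?_, ?_; ?_, ?_, ?_; ?_, ?_, ?_] <;> grind [zeta_pow_nine]

lemma Sg_mul_Xg : Sg * Xg = Xg * Zg * Sg := by
  refine Units.ext ?_
  change Smat * Xmat = Xmat * Zmat * Smat
  rw [Smat_eq, Zmat_eq, Xmat, mul_fin_three, mul_fin_three, mul_fin_three]
  congrm !![?_, ?_, ?_; ?_, ?_, ?_; ?_, ?_, ?_] <;> grind [zeta_pow_nine]

lemma Hg_sq_mul_Sg : Hg ^ 2 * Sg = Sg * Zg * Hg ^ 2 := by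
  refine Units.ext ?_
  change Hmat ^ 2 * Smat = Smat * Zmat * Hmat ^ 2
  rw [Hmat_sq, Zmat_eq, Smat_eq, mul_fin_three, mul_fin_three, mul_fin_three]
  congrm !![?_, ?_, ?_; ?_, ?_, ?_; ?_, ?_, ?_] <;> grind [zeta_pow_nine]

lemma Sg_pow_three_mul_Zg_mul_Xg : Sg ^ 3 * Zg * Xg = Xg * Zg := by
  refine Units.ext ?_
  change Smat ^ 3 * Zmat * Xmat = Xmat * Zmat
  rw [Smat_pow, Zmat_eq, Xmat, mul_fin_three, mul_fin_three, mul_fin_three]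
  congrm !![?_, ?_, ?_; ?_, ?_, ?_; ?_, ?_, ?_] <;> grind [zeta_pow_nine]

lemma Zg_mul_Hg : Zg * Hg = Hg * Xg := by
  refine Units.ext ?_
  change Zmat * Hmat = Hmat * Xmat
  rw [Hmat_eq, Zmat_eq, Xmat, Matrix.mul_smul, Matrix.smul_mul, mul_fin_three, mul_fin_three]
  congrm (_ • !![?_, ?_, ?_; ?_, ?_, ?_; ?_, ?_, ?_]) <;> grind [zeta_pow_nine]

lemma Xg_mul_Hg_mul_Zg : Xg * Hg * Zg = Hg := by
  refine Units.ext ?_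
  change Xmat * Hmat * Zmat = Hmat
  rw [Hmat_eq, Zmat_eq, Xmat, Matrix.mul_smul, Matrix.smul_mul, mul_fin_three, mul_fin_three]
  congrm (_ • !![?_, ?_, ?_; ?_, ?_, ?_; ?_, ?_, ?_]) <;> grind [zeta_pow_nine]

lemma Hg_mul_Sg_sq_mul_Hg : Hg * Sg ^ 2 * Hg = Sg ^ 4 * Hg * (Sg * Xg) := by
  refine Units.ext ?_
  change Hmat * Smat ^ 2 * Hmat = Smat ^ 4 * Hmat * (Smat * Xmat)
  rw [Smat_pow, Smat_pow]
  simp only [Smat_eq, Hmat_eq, Xmat, mul_fin_three, smul_of, smul_cons, smul_empty, smul_eq_mul]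
  congrm !![?_, ?_, ?_; ?_, ?_, ?_; ?_, ?_, ?_] <;> grind [zeta_pow_nine, zeta_cyclotomic]

lemma Hg_mul_Sg_mul_Hg : Hg * Sg * Hg = Sg ^ 5 * Hg * Sg ^ 2 * (Zg ^ 2 * Hg ^ 2) := by
  refine Units.ext ?_
  change Hmat * Smat * Hmat = Smat ^ 5 * Hmat * Smat ^ 2 * (Zmat ^ 2 * Hmat ^ 2)
  rw [Hmat_sq, Zmat_sq, Smat_pow, Smat_pow]
  simp only [Smat_eq, Hmat_eq, mul_fin_three, smul_of, smul_cons, smul_empty, smul_eq_mul]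
  congrm !![?_, ?_, ?_; ?_, ?_, ?_; ?_, ?_, ?_] <;> grind [zeta_pow_nine, zeta_cyclotomic]

end GateRelations

section CliffordGroup

lemma isOfFinOrder_Hg : IsOfFinOrder Hg :=
  isOfFinOrder_iff_pow_eq_one.2 ⟨4, by simp, Hg_pow_four⟩

lemma isOfFinOrder_Sg : IsOfFinOrder Sg :=
  isOfFinOrder_iff_pow_eq_one.2 ⟨9, by simp, Sg_pow_nine⟩

lemma isOfFinOrder_Xg : IsOfFinOrder Xg :=
  isOfFinOrder_iff_pow_eq_one.2 ⟨3, by simp, Xg_pow_three⟩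

lemma isOfFinOrder_Zg : IsOfFinOrder Zg :=
  isOfFinOrder_iff_pow_eq_one.2 ⟨3, by simp, Zg_pow_three⟩

lemma isOfFinOrder_Tg : IsOfFinOrder Tg :=
  IsOfFinOrder.of_pow (n := 3) (by rw [Tg_pow_three]; exact isOfFinOrder_Zg) three_ne_zero

/-- The group generated by the Pauli matrices `X` and `Z`. -/
def pauliGroup : Subgroup (GL (Fin 3) ℂ) := Subgroup.closure {Xg, Zg}

/-- The stabilizer in the Clifford group of the line of `Z` among the four lines of Pauli
matrices, generated by `S`, `X` and `H²`. It plays the role of a Borel subgroup in the Bruhat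
decomposition of the Clifford group. -/
def cliffordBorel : Subgroup (GL (Fin 3) ℂ) := Subgroup.closure {Sg, Xg, Hg ^ 2}

lemma Xg_mem_pauliGroup : Xg ∈ pauliGroup := Subgroup.subset_closure (by simp)

lemma Zg_mem_pauliGroup : Zg ∈ pauliGroup := Subgroup.subset_closure (by simp)

lemma Sg_mem_Sgrp : Sg ∈ Sgrp := Subgroup.subset_closure (by simp)

lemma Xg_mem_Sgrp : Xg ∈ Sgrp := Subgroup.subset_closure (by simp)

lemma Zg_mem_Sgrp : Zg ∈ Sgrp := by
  have h : Zg = Xg⁻¹ * (Sg * Xg) * Sg⁻¹ := by rw [Sg_mul_Xg]; group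
  rw [h]
  exact mul_mem (mul_mem (inv_mem Xg_mem_Sgrp) (mul_mem Sg_mem_Sgrp Xg_mem_Sgrp))
    (inv_mem Sg_mem_Sgrp)

lemma pauliGroup_le_Sgrp : pauliGroup ≤ Sgrp :=
  (Subgroup.closure_le _).2 (by simp [Set.insert_subset_iff, Xg_mem_Sgrp, Zg_mem_Sgrp])

lemma Sgrp_le_cliffordBorel : Sgrp ≤ cliffordBorel :=
  Subgroup.closure_mono (by simp [Set.insert_subset_iff])

lemma Hg_sq_mem_cliffordBorel : Hg ^ 2 ∈ cliffordBorel := Subgroup.subset_closure (by simp)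

lemma Hg_mem_Cliff : Hg ∈ Cliff := Subgroup.subset_closure (by simp)

lemma Sg_mem_Cliff : Sg ∈ Cliff := Subgroup.subset_closure (by simp)

lemma Xg_mem_Cliff : Xg ∈ Cliff := by
  have hZ : Zg = Sg⁻¹ * (Hg ^ 2 * Sg) * (Hg ^ 2)⁻¹ := by rw [Hg_sq_mul_Sg]; group
  have hX : Xg = Hg⁻¹ * (Zg * Hg) := by rw [Zg_mul_Hg]; group
  have hZmem : Zg ∈ Cliff := by
    rw [hZ]
    exact mul_mem (mul_mem (inv_mem Sg_mem_Cliff) (mul_mem (pow_mem Hg_mem_Cliff 2) Sg_mem_Cliff))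
      (inv_mem (pow_mem Hg_mem_Cliff 2))
  rw [hX]
  exact mul_mem (inv_mem Hg_mem_Cliff) (mul_mem hZmem Hg_mem_Cliff)

lemma cliffordBorel_le_Cliff : cliffordBorel ≤ Cliff :=
  (Subgroup.closure_le _).2 (by
    simp [Set.insert_subset_iff, Sg_mem_Cliff, Xg_mem_Cliff, pow_mem Hg_mem_Cliff])

lemma Hg_conj_Xg : Hg * Xg * Hg⁻¹ = Zg := by rw [← Zg_mul_Hg]; group

lemma Hg_conj_Zg : Hg * Zg * Hg⁻¹ = Xg⁻¹ := by
  have h : Hg * Zg = Xg⁻¹ * Hg := by rw [eq_inv_mul_iff_mul_eq, ← mul_assoc, Xg_mul_Hg_mul_Zg]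
  rw [h]
  group

lemma Hg_mem_normalizer_pauliGroup : Hg ∈ Subgroup.normalizer (pauliGroup : Set (GL _ _)) := by
  refine mem_normalizer_closure_of_isOfFinOrder isOfFinOrder_Hg ?_
  rintro x (rfl | rfl)
  · rw [Hg_conj_Xg]
    exact Zg_mem_pauliGroup
  · rw [Hg_conj_Zg]
    exact inv_mem Xg_mem_pauliGroup

lemma Sg_mem_normalizer_pauliGroup : Sg ∈ Subgroup.normalizer (pauliGroup : Set (GL _ _)) := by
  refine mem_normalizer_closure_of_isOfFinOrder isOfFinOrder_Sg ?_
  rintro x (rfl | rfl)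
  · rw [Sg_mul_Xg, mul_inv_cancel_right]
    exact mul_mem Xg_mem_pauliGroup Zg_mem_pauliGroup
  · rw [← commute_Zg_Sg.eq, mul_inv_cancel_right]
    exact Zg_mem_pauliGroup

lemma Hg_sq_mem_normalizer_Sgrp : Hg ^ 2 ∈ Subgroup.normalizer (Sgrp : Set (GL _ _)) := by
  refine mem_normalizer_closure_of_isOfFinOrder isOfFinOrder_Hg.pow ?_
  rintro x (rfl | rfl)
  · rw [Hg_sq_mul_Sg, mul_inv_cancel_right]
    exact mul_mem Sg_mem_Sgrp Zg_mem_Sgrp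
  · have h : Hg ^ 2 * Xg * (Hg ^ 2)⁻¹ = Xg⁻¹ := by
      rw [← Hg_conj_Zg, ← Hg_conj_Xg, sq]
      group
    rw [h]
    exact inv_mem Xg_mem_Sgrp

lemma Tg_mem_normalizer_Sgrp : Tg ∈ Subgroup.normalizer (Sgrp : Set (GL _ _)) := by
  refine mem_normalizer_closure_of_isOfFinOrder isOfFinOrder_Tg ?_
  rintro x (rfl | rfl)
  · rw [commute_Tg_Sg.eq, mul_inv_cancel_right]
    exact Sg_mem_Sgrp
  · have h : Tg * Xg * Tg⁻¹ = Sg⁻¹ * Xg := by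
      rw [eq_inv_mul_iff_mul_eq, ← mul_assoc, Sg_mul_Tg_mul_Xg, mul_inv_cancel_right]
    rw [h]
    exact mul_mem (inv_mem Sg_mem_Sgrp) Xg_mem_Sgrp

lemma Sg_pow_three_mem_pauliGroup : Sg ^ 3 ∈ pauliGroup := by
  have h : Sg ^ 3 = Xg * Zg * (Zg * Xg)⁻¹ := by
    rw [eq_mul_inv_iff_mul_eq, ← mul_assoc, Sg_pow_three_mul_Zg_mul_Xg]
  rw [h]
  exact mul_mem (mul_mem Xg_mem_pauliGroup Zg_mem_pauliGroup)
    (inv_mem (mul_mem Zg_mem_pauliGroup Xg_mem_pauliGroup))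

lemma exists_eq_Sg_pow_mul_of_mem_Sgrp {s : GL (Fin 3) ℂ} (hs : s ∈ Sgrp) :
    ∃ i < 3, ∃ p ∈ pauliGroup, s = Sg ^ i * p := by
  refine closure_induction_left_of_isOfFinOrder
    (p := fun s => ∃ i < 3, ∃ p ∈ pauliGroup, s = Sg ^ i * p) ?_ ?_ ?_ hs
  · rintro x (rfl | rfl)
    exacts [isOfFinOrder_Sg, isOfFinOrder_Xg]
  · exact ⟨0, by simp, 1, one_mem _, by simp⟩
  · rintro x (rfl | rfl) _ ⟨i, hi, p, hp, rfl⟩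
    · rcases (Nat.lt_succ_iff.1 hi).lt_or_eq with hi | rfl
      · exact ⟨i + 1, by lia, p, hp, by rw [pow_succ', mul_assoc]⟩
      · exact ⟨0, by simp, Sg ^ 3 * p, mul_mem Sg_pow_three_mem_pauliGroup hp, by
          rw [pow_zero, one_mul, pow_succ' Sg 2, mul_assoc]⟩
    · have hX : (Sg ^ i)⁻¹ * Xg * Sg ^ i ∈ pauliGroup :=
        (Subgroup.mem_normalizer_iff''.1 (pow_mem Sg_mem_normalizer_pauliGroup i) Xg).1
          Xg_mem_pauliGroup
      exact ⟨i, hi, _, mul_mem hX hp, by group⟩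

lemma mem_or_mul_Hg_sq_mem_Sgrp {b : GL (Fin 3) ℂ} (hb : b ∈ cliffordBorel) :
    b ∈ Sgrp ∨ ∃ s ∈ Sgrp, b = s * Hg ^ 2 := by
  refine closure_induction_left_of_isOfFinOrder
    (p := fun b => b ∈ Sgrp ∨ ∃ s ∈ Sgrp, b = s * Hg ^ 2) ?_ (.inl (one_mem _)) ?_ hb
  · rintro x (rfl | rfl | rfl)
    exacts [isOfFinOrder_Sg, isOfFinOrder_Xg, isOfFinOrder_Hg.pow]
  · have hmul {x y : GL (Fin 3) ℂ} (hx : x ∈ Sgrp)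
        (hy : y ∈ Sgrp ∨ ∃ s ∈ Sgrp, y = s * Hg ^ 2) :
        x * y ∈ Sgrp ∨ ∃ s ∈ Sgrp, x * y = s * Hg ^ 2 := by
      rcases hy with hy | ⟨s, hs, rfl⟩
      · exact .inl (mul_mem hx hy)
      · exact .inr ⟨x * s, mul_mem hx hs, (mul_assoc x s _).symm⟩
    have hconj {s : GL (Fin 3) ℂ} (hs : s ∈ Sgrp) : Hg ^ 2 * s * (Hg ^ 2)⁻¹ ∈ Sgrp :=
      (Subgroup.mem_normalizer_iff.1 Hg_sq_mem_normalizer_Sgrp s).1 hs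
    rintro x (rfl | rfl | rfl) y hy
    · exact hmul Sg_mem_Sgrp hy
    · exact hmul Xg_mem_Sgrp hy
    · rcases hy with hy | ⟨s, hs, rfl⟩
      · exact .inr ⟨_, hconj hy, by group⟩
      · refine .inl ?_
        have h : Hg ^ 2 * (s * Hg ^ 2) = Hg ^ 2 * s * (Hg ^ 2)⁻¹ * Hg ^ 4 := by group
        rw [h, Hg_pow_four, mul_one]
        exact hconj hs

lemma Hg_mul_Sg_pow_mul_Hg_mem {i : ℕ} (hi : i < 3) :
    Hg * Sg ^ i * Hg ∈ (cliffordBorel : Set (GL (Fin 3) ℂ)) ∪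
      DoubleCoset.doubleCoset Hg cliffordBorel cliffordBorel := by
  have hS : Sg ∈ cliffordBorel := Sgrp_le_cliffordBorel Sg_mem_Sgrp
  have hX : Xg ∈ cliffordBorel := Sgrp_le_cliffordBorel Xg_mem_Sgrp
  have hZ : Zg ∈ cliffordBorel := Sgrp_le_cliffordBorel Zg_mem_Sgrp
  interval_cases i
  · left
    rw [pow_zero, mul_one, ← sq]
    exact Hg_sq_mem_cliffordBorel
  · right
    rw [pow_one, Hg_mul_Sg_mul_Hg, mul_assoc _ (Sg ^ 2)]
    exact DoubleCoset.mem_doubleCoset.2 ⟨_, pow_mem hS 5, _,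
      mul_mem (pow_mem hS 2) (mul_mem (pow_mem hZ 2) Hg_sq_mem_cliffordBorel), rfl⟩
  · right
    rw [Hg_mul_Sg_sq_mul_Hg]
    exact DoubleCoset.mem_doubleCoset.2 ⟨_, pow_mem hS 4, _, mul_mem hS hX, rfl⟩

lemma Hg_mul_mul_Hg_mem {b : GL (Fin 3) ℂ} (hb : b ∈ cliffordBorel) :
    Hg * b * Hg ∈ (cliffordBorel : Set (GL (Fin 3) ℂ)) ∪
      DoubleCoset.doubleCoset Hg cliffordBorel cliffordBorel := by
  have mul_mem_right {x c : GL (Fin 3) ℂ} (hx : x ∈ (cliffordBorel : Set (GL (Fin 3) ℂ)) ∪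
      DoubleCoset.doubleCoset Hg cliffordBorel cliffordBorel) (hc : c ∈ cliffordBorel) :
      x * c ∈ (cliffordBorel : Set (GL (Fin 3) ℂ)) ∪
        DoubleCoset.doubleCoset Hg cliffordBorel cliffordBorel :=
    hx.imp (mul_mem · hc) (doubleCoset_mul_mem_of_mem hc)
  have hSgrp {s : GL (Fin 3) ℂ} (hs : s ∈ Sgrp) :
      Hg * s * Hg ∈ (cliffordBorel : Set (GL (Fin 3) ℂ)) ∪
        DoubleCoset.doubleCoset Hg cliffordBorel cliffordBorel := by
    obtain ⟨i, hi, p, hp, rfl⟩ := exists_eq_Sg_pow_mul_of_mem_Sgrp hs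
    have hp' : Hg⁻¹ * p * Hg ∈ pauliGroup :=
      (Subgroup.mem_normalizer_iff''.1 Hg_mem_normalizer_pauliGroup p).1 hp
    rw [show Hg * (Sg ^ i * p) * Hg = Hg * Sg ^ i * Hg * (Hg⁻¹ * p * Hg) by group]
    exact mul_mem_right (Hg_mul_Sg_pow_mul_Hg_mem hi)
      (Sgrp_le_cliffordBorel (pauliGroup_le_Sgrp hp'))
  rcases mem_or_mul_Hg_sq_mem_Sgrp hb with hb | ⟨s, hs, rfl⟩
  · exact hSgrp hb
  · rw [show Hg * (s * Hg ^ 2) * Hg = Hg * s * Hg * Hg ^ 2 by group]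
    exact mul_mem_right (hSgrp hs) Hg_sq_mem_cliffordBorel

lemma Cliff_subset_union_doubleCoset :
    (Cliff : Set (GL (Fin 3) ℂ)) ⊆ (cliffordBorel : Set (GL (Fin 3) ℂ)) ∪
      DoubleCoset.doubleCoset Hg cliffordBorel cliffordBorel := by
  refine closure_subset_union_doubleCoset (fun _ => Hg_mul_mul_Hg_mem) ?_ ?_
  · rintro x (rfl | rfl)
    exacts [isOfFinOrder_Hg, isOfFinOrder_Sg]
  · rintro x (rfl | rfl)
    exacts [.inl rfl, .inr (Sgrp_le_cliffordBorel Sg_mem_Sgrp)]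

lemma Tg_inv_eq : Tg⁻¹ = Hg ^ 2 * Tg * Hg ^ 2 := by
  refine inv_eq_of_mul_eq_one_right ?_
  rw [← mul_assoc, ← mul_assoc, Tg_mul_Hg_sq_mul_Tg, ← pow_add, Hg_pow_four]

/-- Since `T` normalizes `𝒮`, `T s T ∈ 𝒮 T²`, and `T² = Z T⁻¹` involves only one `T`. -/
lemma Tg_mul_mul_Tg_mem {b : GL (Fin 3) ℂ} (hb : b ∈ cliffordBorel) :
    Tg * b * Tg ∈ Cliff ∨
      ∃ c ∈ Cliff, ∃ b' ∈ cliffordBorel, Tg * b * Tg = c * Tg * b' := by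
  have hconj {s : GL (Fin 3) ℂ} (hs : s ∈ Sgrp) : Tg * s * Tg⁻¹ ∈ Cliff :=
    cliffordBorel_le_Cliff (Sgrp_le_cliffordBorel
      ((Subgroup.mem_normalizer_iff.1 Tg_mem_normalizer_Sgrp s).1 hs))
  have hHH : Hg ^ 2 ∈ Cliff := pow_mem Hg_mem_Cliff 2
  rcases mem_or_mul_Hg_sq_mem_Sgrp hb with hs | ⟨s, hs, rfl⟩
  · have hZ : Zg ∈ Cliff := cliffordBorel_le_Cliff (Sgrp_le_cliffordBorel Zg_mem_Sgrp)
    refine .inr ⟨_, mul_mem (mul_mem (hconj hs) hZ) hHH, _, Hg_sq_mem_cliffordBorel, ?_⟩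
    calc Tg * b * Tg = Tg * b * Tg⁻¹ * (Tg ^ 3 * Tg⁻¹) := by group
      _ = Tg * b * Tg⁻¹ * Zg * Hg ^ 2 * Tg * Hg ^ 2 := by
        rw [Tg_pow_three, Tg_inv_eq]
        simp only [mul_assoc]
  · refine .inl ?_
    have h : Tg * (s * Hg ^ 2) * Tg = Tg * s * Tg⁻¹ * (Tg * Hg ^ 2 * Tg) := by group
    rw [h, Tg_mul_Hg_sq_mul_Tg]
    exact mul_mem (hconj hs) hHH

end CliffordGroup

section Words

variable {m : ℕ} {g : GL (Fin 3) ℂ}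

lemma wordProd_cons (l : Letter) (w : List Letter) : wordProd (l :: w) = l.g * wordProd w := by
  simp [wordProd]

lemma wordProd_append (v w : List Letter) : wordProd (v ++ w) = wordProd v * wordProd w := by
  simp [wordProd]

lemma exists_wordProd_eq_of_mem_CliffT (hg : g ∈ CliffT) : ∃ w, wordProd w = g := by
  refine closure_induction_left_of_isOfFinOrder (p := fun g => ∃ w, wordProd w = g) ?_
    ⟨[], rfl⟩ ?_ hg
  · rintro x (rfl | rfl | rfl)
    exacts [isOfFinOrder_Hg, isOfFinOrder_Sg, isOfFinOrder_Tg]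
  · rintro x (rfl | rfl | rfl) _ ⟨w, rfl⟩
    exacts [⟨.H :: w, wordProd_cons _ _⟩, ⟨.S :: w, wordProd_cons _ _⟩,
      ⟨.T :: w, wordProd_cons _ _⟩]

lemma exists_wordProd_eq_of_mem_Cliff (hg : g ∈ Cliff) :
    ∃ w, wordProd w = g ∧ w.count Letter.T = 0 := by
  refine closure_induction_left_of_isOfFinOrder
    (p := fun g => ∃ w, wordProd w = g ∧ w.count Letter.T = 0) ?_ ⟨[], rfl, rfl⟩ ?_ hg
  · rintro x (rfl | rfl)
    exacts [isOfFinOrder_Hg, isOfFinOrder_Sg]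
  · rintro x (rfl | rfl) _ ⟨w, rfl, hw⟩
    exacts [⟨.H :: w, wordProd_cons _ _, by simpa using hw⟩,
      ⟨.S :: w, wordProd_cons _ _, by simpa using hw⟩]

lemma IsReducedProduct.exists_wordProd_eq (hg : IsReducedProduct cliffordBorel Cliff Tg m g) :
    ∃ w, wordProd w = g ∧ w.count Letter.T = m := by
  induction hg with
  | one => exact ⟨[], rfl, rfl⟩
  | step hc _ _ ih =>
    obtain ⟨v, rfl, hv⟩ := exists_wordProd_eq_of_mem_Cliff hc
    obtain ⟨w, rfl, hw⟩ := ih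
    exact ⟨.T :: (v ++ w), by rw [wordProd_cons, wordProd_append]; rfl, by simp [hv, hw]⟩

lemma HasNormalForm.exists_wordProd_eq (hg : HasNormalForm cliffordBorel Cliff Tg m g) :
    ∃ w, wordProd w = g ∧ w.count Letter.T = m := by
  obtain ⟨c, hc, u, hu, rfl⟩ := hg
  obtain ⟨v, rfl, hv⟩ := exists_wordProd_eq_of_mem_Cliff hc
  obtain ⟨w, rfl, hw⟩ := hu.exists_wordProd_eq
  exact ⟨v ++ w, wordProd_append v w, by simp [hv, hw]⟩

lemma exists_hasNormalForm_wordProd (w : List Letter) :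
    ∃ m ≤ w.count Letter.T, HasNormalForm cliffordBorel Cliff Tg m (wordProd w) := by
  induction w with
  | nil => exact ⟨0, le_rfl, hasNormalForm_one⟩
  | cons l w ih =>
    obtain ⟨m, hm, hw⟩ := ih
    rw [wordProd_cons]
    cases l with
    | H => exact ⟨m, by simpa using hm, hw.mul_left Hg_mem_Cliff⟩
    | S => exact ⟨m, by simpa using hm, hw.mul_left Sg_mem_Cliff⟩
    | T =>
      obtain ⟨m', hm', hTw⟩ :=
        hw.exists_mul_left_generator cliffordBorel_le_Cliff fun _ => Tg_mul_mul_Tg_mem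
      exact ⟨m', by simp only [List.count_cons_self]; lia, hTw⟩

end Words

section Arithmetic

lemma exists_isIntegral_pow_mul_of_mem_closure {R : Type*} [CommRing R] {d : R}
    (hd : IsIntegral ℤ d) {s : Set R} (hs : ∀ x ∈ s, ∃ n : ℕ, IsIntegral ℤ (d ^ n * x)) {x : R}
    (hx : x ∈ Subring.closure s) : ∃ n : ℕ, IsIntegral ℤ (d ^ n * x) := by
  induction hx using Subring.closure_induction with
  | mem x hx => exact hs x hx
  | zero => exact ⟨0, by simpa using isIntegral_zero⟩
  | one => exact ⟨0, by simpa using isIntegral_one⟩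
  | add x y _ _ hx hy =>
    obtain ⟨m, hm⟩ := hx
    obtain ⟨n, hn⟩ := hy
    refine ⟨m + n, ?_⟩
    rw [show d ^ (m + n) * (x + y) = d ^ n * (d ^ m * x) + d ^ m * (d ^ n * y) by ring]
    exact ((hd.pow n).mul hm).add ((hd.pow m).mul hn)
  | neg x _ hx =>
    obtain ⟨m, hm⟩ := hx
    exact ⟨m, by simpa using hm.neg⟩
  | mul x y _ _ hx hy =>
    obtain ⟨m, hm⟩ := hx
    obtain ⟨n, hn⟩ := hy
    refine ⟨m + n, ?_⟩
    rw [show d ^ (m + n) * (x * y) = d ^ m * x * (d ^ n * y) by ring]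
    exact hm.mul hn

lemma alpha_pos : 0 < αR :=
  Real.sin_pos_of_pos_of_lt_pi (by positivity) (by linarith [Real.pi_pos])

lemma sqrt_three_eq : √3 = 6 * αR - 8 * αR ^ 3 := by
  have h := Real.sin_three_mul (2 * Real.pi / 9)
  rw [show 3 * (2 * Real.pi / 9) = Real.pi - Real.pi / 3 by ring, Real.sin_pi_sub,
    Real.sin_pi_div_three, ← αR] at h
  linarith

lemma alpha_minpoly : 64 * αR ^ 6 - 96 * αR ^ 4 + 36 * αR ^ 2 - 3 = 0 := by
  have h : √3 ^ 2 = 3 := Real.sq_sqrt zero_le_three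
  rw [sqrt_three_eq] at h
  linear_combination h

lemma not_one_third_mem_Zα : (1 / 3 : ℝ) ∉ Zα := by
  intro h
  obtain ⟨n, hn⟩ := exists_isIntegral_pow_mul_of_mem_closure
    (d := 2) (by simpa using isIntegral_algebraMap (R := ℤ) (A := ℝ) (x := 2))
    (by
      rintro x (rfl | rfl)
      · exact ⟨1, by simpa using isIntegral_one⟩
      · refine ⟨1, ?_⟩
        have h := Real.isIntegral_two_mul_sin_rat_mul_pi (2 / 9)
        rw [show ((2 / 9 : ℚ) : ℝ) * Real.pi = 2 * Real.pi / 9 by push_cast; ring] at h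
        simpa [αR] using h) h
  have hℚ : IsIntegral ℤ (2 ^ n / 3 : ℚ) := by
    rw [← isIntegral_algebraMap_iff (B := ℝ) (FaithfulSMul.algebraMap_injective ℚ ℝ)]
    simpa [div_eq_mul_inv] using hn
  obtain ⟨m, hm⟩ := IsIntegrallyClosed.isIntegral_iff.1 hℚ
  have h3 : (3 : ℤ) ∣ 2 ^ n := by
    refine ⟨m, ?_⟩
    have : (2 ^ n : ℚ) = 3 * m := by
      rw [show (m : ℚ) = 2 ^ n / 3 from hm]
      ring
    exact_mod_cast this
  have h32 := Int.prime_three.dvd_of_dvd_pow h3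
  norm_num at h32

/-- `α` as an element of `ℤ[α]`. -/
def alpha : Zα := ⟨αR, alpha_mem_Zα⟩

/-- `1/2` as an element of `ℤ[α]`. -/
def half : Zα := ⟨1 / 2, Subring.subset_closure (by simp)⟩

/-- `cos(2π/9)` as an element of `ℤ[α]`. -/
def cosAngle : Zα := -2 + 10 * alpha ^ 2 - 8 * alpha ^ 4

/-- `α³/√3` as an element of `ℤ[α]`. -/
def lam : Zα := -2 * alpha ^ 4 + 3 * half * alpha ^ 2 - half ^ 3

@[simp, norm_cast]
lemma coe_ofNat {R : Type*} [Ring R] (s : Subring R) (n : ℕ) [n.AtLeastTwo] :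
    ((ofNat(n) : s) : R) = ofNat(n) := rfl

@[simp]
lemma coe_alpha : (alpha : ℝ) = αR := rfl

@[simp]
lemma coe_half : (half : ℝ) = 1 / 2 := rfl

lemma two_mul_half : 2 * half = 1 := by
  refine Subtype.ext ?_
  push_cast [coe_half]
  norm_num

lemma alpha_pow_six_dvd_three : alpha ^ 6 ∣ 3 := by
  refine ⟨4 * (32 * (1 - 2 * alpha ^ 2) * (1 - alpha ^ 2)) ^ 2, Subtype.ext ?_⟩
  push_cast [coe_alpha]
  grind [alpha_minpoly]

lemma three_dvd_alpha_pow_six : 3 ∣ alpha ^ 6 := by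
  refine ⟨half ^ 6 * (1 - 12 * alpha ^ 2 + 32 * alpha ^ 4), Subtype.ext ?_⟩
  push_cast [coe_alpha, coe_half]
  linear_combination (1 / 64) * alpha_minpoly

lemma not_alpha_dvd_one : ¬ alpha ∣ 1 := by
  intro h
  obtain ⟨y, hy⟩ : 3 ∣ (1 : Zα) :=
    three_dvd_alpha_pow_six.trans (by simpa using pow_dvd_pow_of_dvd h 6)
  have hy' : 1 / 3 = (y : ℝ) := by
    rw [div_eq_iff three_ne_zero, mul_comm]
    exact_mod_cast hy
  exact not_one_third_mem_Zα (hy' ▸ y.2)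

lemma lam_mul_sqrt_three : lam * √3 = αR ^ 3 := by
  rw [sqrt_three_eq]
  push_cast [lam, coe_alpha, coe_half]
  linear_combination (αR / 4) * alpha_minpoly

lemma isUnit_two : IsUnit (2 : Zα) := .of_mul_eq_one half two_mul_half

lemma isUnit_lam : IsUnit lam := by
  refine .of_mul_eq_one (2 * (32 * (1 - 2 * alpha ^ 2) * (1 - alpha ^ 2))) (Subtype.ext ?_)
  push_cast [lam, coe_alpha, coe_half]
  grind [alpha_minpoly]

end Arithmetic

section Numerators

/-- `z = x / α ^ (2n) + i y / α ^ (2n+1)` with `x` and `y` in `ℤ[α]`. -/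
structure IsNumerator (n : ℕ) (z : ℂ) (x y : Zα) : Prop where
  re : αR ^ (2 * n) * z.re = x
  im : αR ^ (2 * n + 1) * z.im = y

variable {m n : ℕ} {z w : ℂ} {x y u v q : Zα}

lemma IsNumerator.add (hz : IsNumerator n z x y) (hw : IsNumerator n w u v) :
    IsNumerator n (z + w) (x + u) (y + v) where
  re := by simp [mul_add, hz.re, hw.re]
  im := by simp [mul_add, hz.im, hw.im]

lemma IsNumerator.neg (hz : IsNumerator n z x y) : IsNumerator n (-z) (-x) (-y) where
  re := by simp [hz.re]
  im := by simp [hz.im]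

lemma IsNumerator.star (hz : IsNumerator n z x y) : IsNumerator n (star z) x (-y) where
  re := by simp [hz.re]
  im := by simp [hz.im]

lemma IsNumerator.mul (hz : IsNumerator m z x y) (hw : IsNumerator n w u v)
    (hq : y * v = alpha ^ 2 * q) : IsNumerator (m + n) (z * w) (x * u - q) (x * v + y * u) := by
  have hα : αR ^ 2 ≠ 0 := pow_ne_zero 2 alpha_pos.ne'
  have hq' : (y : ℝ) * v = αR ^ 2 * q := congrArg Subtype.val hq
  constructor
  · rw [Complex.mul_re]
    refine mul_left_cancel₀ hα ?_
    push_cast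
    rw [mul_sub (αR ^ 2) (x * u : ℝ), ← hq', ← hz.re, ← hz.im, ← hw.re, ← hw.im]
    ring
  · rw [Complex.mul_im]
    push_cast
    rw [← hz.re, ← hz.im, ← hw.re, ← hw.im]
    ring

lemma zeta_im : ζ.im = αR := by rw [zeta_eq_exp, Complex.exp_ofReal_mul_I_im, αR]

lemma zeta_re : ζ.re = cosAngle := by
  push_cast [cosAngle, coe_alpha]
  rw [zeta_eq_exp, Complex.exp_ofReal_mul_I_re]
  have htriple := Real.cos_three_mul (2 * Real.pi / 9)
  rw [show 3 * (2 * Real.pi / 9) = Real.pi - Real.pi / 3 by ring, Real.cos_pi_sub,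
    Real.cos_pi_div_three] at htriple
  have hsq : αR ^ 2 + Real.cos (2 * Real.pi / 9) ^ 2 = 1 := Real.sin_sq_add_cos_sq _
  set c := Real.cos (2 * Real.pi / 9)
  have hc : c * (1 - 4 * αR ^ 2) = -(1 / 2) := by linear_combination -htriple - 4 * c * hsq
  have hne : 1 - 4 * αR ^ 2 ≠ 0 := fun h => by norm_num [h] at hc
  refine mul_right_cancel₀ hne (hc.trans ?_)
  linear_combination (-1 / 2) * alpha_minpoly

lemma isNumerator_zeta : IsNumerator 0 ζ cosAngle (alpha ^ 2) where
  re := by simp [zeta_re]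
  im := by simp [zeta_im, sq]

lemma isNumerator_zeta_pow_three :
    IsNumerator 0 (ζ ^ 3) (-half) (alpha ^ 2 * (3 - 4 * alpha ^ 2)) where
  re := by simp [zeta_pow_three_eq]
  im := by
    have him : (ζ ^ 3).im = √3 / 2 := by simp [zeta_pow_three_eq]
    rw [him, sqrt_three_eq]
    push_cast [coe_alpha]
    ring

lemma exists_isNumerator_zeta_pow_three :
    ∃ p q, alpha ^ 3 ∣ p - 1 ∧ IsNumerator 0 (ζ ^ 3) p (alpha ^ 3 * q) := by
  obtain ⟨d, hd⟩ := alpha_pow_six_dvd_three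
  refine ⟨-half, alpha ^ 5 * d - 4 * alpha, ⟨-alpha ^ 3 * d * half, ?_⟩, ?_⟩
  · linear_combination two_mul_half - half * hd
  · have h := isNumerator_zeta_pow_three
    rwa [show alpha ^ 2 * (3 - 4 * alpha ^ 2) = alpha ^ 3 * (alpha ^ 5 * d - 4 * alpha) by
      linear_combination alpha ^ 2 * hd] at h

lemma exists_isNumerator_neg_zeta_pow_five :
    ∃ p q, alpha ∣ p + 1 ∧ IsNumerator 0 (-ζ ^ 5) p (alpha ^ 2 * q) := by
  obtain ⟨d, hd⟩ := alpha_pow_six_dvd_three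
  refine ⟨half * (cosAngle ^ 2 - alpha ^ 2) + 2 * alpha ^ 2 * cosAngle * (3 - 4 * alpha ^ 2),
    cosAngle - (3 - 4 * alpha ^ 2) * (cosAngle ^ 2 - alpha ^ 2), ?_, ?_⟩
  · refine ⟨alpha * (half * ((10 - 8 * alpha ^ 2) * (cosAngle - 2) - 1) +
      2 * cosAngle * (3 - 4 * alpha ^ 2)) + alpha ^ 5 * d, ?_⟩
    rw [cosAngle]
    linear_combination 2 * two_mul_half + hd
  · have hsq := isNumerator_zeta.mul isNumerator_zeta (q := alpha ^ 2) (by ring)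
    have hfive := (isNumerator_zeta_pow_three.mul hsq
      (q := 2 * alpha ^ 2 * cosAngle * (3 - 4 * alpha ^ 2)) (by ring)).neg
    convert hfive using 1
    · ring
    · ring
    · linear_combination -alpha ^ 2 * cosAngle * two_mul_half

/-- Here `ζ⁸ / (i√3) = -(α + i cos(2π/9)) / √3`, so the bound on the denominator comes from
`α³ / √3 ∈ ℤ[α]`. -/
lemma isNumerator_zeta_pow_eight_div :
    IsNumerator 1 (ζ ^ 8 * (-(1 + 2 * ζ ^ 3) / 3)) (-lam) (-lam * cosAngle) := by
  obtain ⟨r, hr⟩ : ∃ r : ℝ, √3 * r = 1 := ⟨_, mul_inv_cancel₀ (by positivity)⟩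
  have hlam : (lam : ℝ) = αR ^ 3 * r := by linear_combination r * lam_mul_sqrt_three - lam * hr
  have h : (I * (√3 : ℂ))⁻¹ = -(I * r) := by
    refine inv_eq_of_mul_eq_one_right ?_
    have hr' : (√3 * r : ℂ) = 1 := by exact_mod_cast hr
    linear_combination hr' - √3 * r * Complex.I_sq
  rw [← star_zeta, ← inv_I_mul_sqrt_three, h]
  constructor
  · have hre : (Star.star ζ * -(I * r)).re = -(αR * r) := by simp [zeta_im]
    rw [hre]
    push_cast
    rw [hlam]
    ring
  · have him : (Star.star ζ * -(I * r)).im = -(cosAngle * r) := by simp [zeta_re]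
    rw [him]
    push_cast
    rw [hlam]
    ring

end Numerators

section Observables

/-- The Hermitian operators on `ℂ³`, on which `GL(3, ℂ)` acts by `g • M = g M g†`. -/
abbrev Observable : Type := selfAdjoint (Matrix (Fin 3) (Fin 3) ℂ)

instance : MulAction (GL (Fin 3) ℂ) Observable where
  smul g M := ⟨g.1 * M.1 * star g.1, M.2.conjugate _⟩
  one_smul M := Subtype.ext (show 1 * M.1 * star 1 = M.1 by rw [one_mul, star_one, mul_one])
  mul_smul g h M := Subtype.ext
    (show g.1 * h.1 * M.1 * star (g.1 * h.1) = g.1 * (h.1 * M.1 * star h.1) * star g.1 by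
      simp only [star_mul, mul_assoc])

lemma coe_smul_observable (g : GL (Fin 3) ℂ) (M : Observable) :
    (g • M).1 = g.1 * M.1 * g.1ᴴ := rfl

/-- The Pauli matrices `Z`, `X`, `XZ`, `XZ²`. -/
def pauli : Fin 4 → Matrix (Fin 3) (Fin 3) ℂ := ![Zmat, Xmat, Xmat * Zmat, Xmat * Zmat ^ 2]

/-- The coordinate `tr(P_k M) / 3` of an observable along the `k`-th Pauli matrix `P_k`. -/
def pauliCoord (M : Observable) (k : Fin 4) : ℂ := trace (pauli k * M.1) / 3

variable (M : Observable)

lemma pauli_eq : pauli =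
    ![!![1, 0, 0; 0, ζ ^ 3, 0; 0, 0, ζ ^ 6], !![0, 0, 1; 1, 0, 0; 0, 1, 0],
      !![0, 0, ζ ^ 6; 1, 0, 0; 0, ζ ^ 3, 0], !![0, 0, ζ ^ 3; 1, 0, 0; 0, ζ ^ 6, 0]] := by
  rw [pauli, Zmat_sq, Zmat_eq, Xmat, mul_fin_three, mul_fin_three]
  simp

lemma pauliCoord_smul (g : GL (Fin 3) ℂ) (k : Fin 4) :
    pauliCoord (g • M) k = trace (g.1ᴴ * pauli k * g.1 * M.1) / 3 := by
  rw [pauliCoord, coe_smul_observable, ← mul_assoc, ← mul_assoc, trace_mul_comm]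
  simp only [mul_assoc]

lemma star_pauliCoord (k : Fin 4) : star (pauliCoord M k) = trace ((pauli k)ᴴ * M.1) / 3 := by
  rw [pauliCoord, star_div₀, ← trace_conjTranspose, conjTranspose_mul, ← star_eq_conjTranspose M.1,
    M.2.star_eq, trace_mul_comm, star_ofNat]

lemma conjTranspose_fin_three {R : Type*} [Star R] (a b c d e f g h i : R) :
    !![a, b, c; d, e, f; g, h, i]ᴴ =
      !![star a, star d, star g; star b, star e, star h; star c, star f, star i] := by
  ext i j
  fin_cases i <;> fin_cases j <;> rfl

lemma pauliCoord_Sg_smul :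
    pauliCoord (Sg • M) = ![pauliCoord M 0, pauliCoord M 3, pauliCoord M 1, pauliCoord M 2] := by
  have h (k : Fin 4) : Smatᴴ * pauli k * Smat = pauli (![0, 3, 1, 2] k) := by
    rw [pauli_eq, Smat_eq, conjTranspose_fin_three]
    simp only [star_pow, star_zeta, star_zero]
    fin_cases k <;>
      simp only [Fin.zero_eta, Fin.mk_one, Fin.reduceFinMk, cons_val, mul_fin_three] <;>
      congrm !![?_, ?_, ?_; ?_, ?_, ?_; ?_, ?_, ?_] <;> grind [zeta_pow_nine]
  funext k
  rw [pauliCoord_smul]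
  change trace (Smatᴴ * _ * Smat * _) / 3 = _
  rw [h]
  fin_cases k <;> rfl

lemma pauliCoord_Xg_smul (k : Fin 4) :
    pauliCoord (Xg • M) k = (![ζ ^ 3, 1, ζ ^ 3, ζ ^ 3 * ζ ^ 3] k) * pauliCoord M k := by
  have h : Xmatᴴ * pauli k * Xmat = (![ζ ^ 3, 1, ζ ^ 3, ζ ^ 3 * ζ ^ 3] k) • pauli k := by
    rw [pauli_eq, Xmat, conjTranspose_fin_three]
    simp only [star_one, star_zero]
    fin_cases k <;>
      simp only [Fin.zero_eta, Fin.mk_one, Fin.reduceFinMk, cons_val, mul_fin_three, smul_of,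
        smul_cons, smul_empty, smul_eq_mul] <;>
      congrm !![?_, ?_, ?_; ?_, ?_, ?_; ?_, ?_, ?_] <;> grind [zeta_pow_nine]
  rw [pauliCoord_smul]
  change trace (Xmatᴴ * _ * Xmat * _) / 3 = _
  rw [h, Matrix.smul_mul, trace_smul, smul_eq_mul, mul_div_assoc, pauliCoord]

lemma pauliCoord_Hg_smul :
    pauliCoord (Hg • M) = ![pauliCoord M 1, star (pauliCoord M 0),
      ζ ^ 3 * (ζ ^ 3 * pauliCoord M 3), star (pauliCoord M 2)] := by
  have h (k : Fin 4) : Hmatᴴ * pauli k * Hmat =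
      ![pauli 1, (pauli 0)ᴴ, (ζ ^ 3 * ζ ^ 3) • pauli 3, (pauli 2)ᴴ] k := by
    rw [pauli_eq, Hmat_eq]
    fin_cases k <;>
      simp only [Fin.zero_eta, Fin.mk_one, Fin.reduceFinMk, cons_val, mul_fin_three, smul_of,
        smul_cons, smul_empty, smul_eq_mul, conjTranspose_fin_three, star_mul', star_div₀,
        star_neg, star_add, star_pow, star_zeta, star_zero, star_one, star_ofNat] <;>
      congrm !![?_, ?_, ?_; ?_, ?_, ?_; ?_, ?_, ?_] <;> grind [zeta_pow_nine, zeta_cyclotomic]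
  funext k
  rw [pauliCoord_smul]
  change trace (Hmatᴴ * _ * Hmat * _) / 3 = _
  rw [h]
  fin_cases k
  · rfl
  · exact (star_pauliCoord M 0).symm
  · simp only [Fin.reduceFinMk, cons_val, Matrix.smul_mul, trace_smul, smul_eq_mul, pauliCoord,
      mul_div_assoc, mul_assoc]
  · exact (star_pauliCoord M 2).symm

lemma pauliCoord_Tg_smul_zero : pauliCoord (Tg • M) 0 = pauliCoord M 0 := by
  have h : Tmatᴴ * pauli 0 * Tmat = pauli 0 := by
    rw [pauli_eq, Tmat, conjTranspose_fin_three]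
    simp only [star_pow, star_zeta, star_zero, star_one, cons_val, mul_fin_three]
    congrm !![?_, ?_, ?_; ?_, ?_, ?_; ?_, ?_, ?_] <;> grind [zeta_pow_nine]
  rw [pauliCoord_smul]
  change trace (Tmatᴴ * _ * Tmat * _) / 3 = _
  rw [h, pauliCoord]

/-- The factor `-(1 + 2 * ζ ^ 3) / 3` is `1 / (i√3)`. -/
lemma pauliCoord_Tg_smul_succ (k : Fin 3) :
    pauliCoord (Tg • M) k.succ =
      ζ ^ 8 * (-(1 + 2 * ζ ^ 3) / 3) * (pauliCoord M 1 + pauliCoord M 2 + pauliCoord M 3) +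
        -ζ ^ 5 * (pauliCoord M k.succ + pauliCoord M (k + 1).succ) := by
  have h : Tmatᴴ * pauli k.succ * Tmat =
      (ζ ^ 8 * (-(1 + 2 * ζ ^ 3) / 3)) • (pauli 1 + pauli 2 + pauli 3) +
        (-ζ ^ 5) • (pauli k.succ + pauli (k + 1).succ) := by
    rw [pauli_eq, Tmat]
    fin_cases k <;>
      simp only [Fin.zero_eta, Fin.mk_one, Fin.reduceFinMk, Fin.reduceSucc, Fin.reduceAdd,
        Fin.succ_zero_eq_one, Fin.succ_one_eq_two, zero_add, cons_val, mul_fin_three, smul_of,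
        smul_cons, smul_empty, smul_eq_mul, of_add_of, add_cons, head_cons, tail_cons,
        empty_add_empty, conjTranspose_fin_three, star_pow, star_zeta, star_zero, star_one] <;>
      congrm !![?_, ?_, ?_; ?_, ?_, ?_; ?_, ?_, ?_] <;> grind [zeta_pow_nine, zeta_cyclotomic]
  rw [pauliCoord_smul]
  change trace (Tmatᴴ * _ * Tmat * _) / 3 = _
  rw [h]
  simp only [pauliCoord, add_mul, Matrix.smul_mul, trace_add, trace_smul, smul_eq_mul]
  ring

end Observables

section Residues

/-- At level `n`, the complex number `z` has numerators congruent to `a` modulo `α` for its real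
part and to `b` modulo `α³` for its imaginary part. This is coarse enough not to see
multiplication by `ω`. -/
def IsResidue (n : ℕ) (z : ℂ) (a b : Zα) : Prop :=
  ∃ x y, alpha ∣ x - a ∧ alpha ^ 3 ∣ y - b ∧ IsNumerator n z x y

/-- The Pauli coordinates of `M` have residues `a`, `b` at level `n`. -/
def HasResidues (n : ℕ) (M : Observable) (a b : Fin 4 → Zα) : Prop :=
  ∀ k, IsResidue n (pauliCoord M k) (a k) (b k)

variable {n : ℕ}

lemma IsNumerator.isResidue {z : ℂ} {x y : Zα} (hz : IsNumerator n z x y) : IsResidue n z x y :=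
  ⟨x, y, by simp, by simp, hz⟩

lemma IsResidue.star {z : ℂ} {a b : Zα} (hz : IsResidue n z a b) :
    IsResidue n (star z) a (-b) := by
  obtain ⟨x, y, hx, hy, h⟩ := hz
  exact ⟨x, -y, hx, by simpa [neg_add_eq_sub] using (dvd_sub_comm.1 hy), h.star⟩

lemma IsResidue.zeta_pow_three_mul {z : ℂ} {a b : Zα} (hz : IsResidue n z a b) :
    IsResidue n (ζ ^ 3 * z) a b := by
  obtain ⟨p, q, ⟨d, hd⟩, hζ⟩ := exists_isNumerator_zeta_pow_three
  obtain ⟨x, y, ⟨d₁, hx⟩, ⟨d₂, hy⟩, h⟩ := hz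
  refine ⟨p * x - alpha * q * y, p * y + alpha ^ 3 * q * x,
    ⟨alpha ^ 2 * d * x - q * y + d₁, ?_⟩, ⟨d * y + d₂ + q * x, ?_⟩, ?_⟩
  · linear_combination x * hd + hx
  · linear_combination y * hd + hy
  · simpa only [zero_add] using hζ.mul h (q := alpha * q * y) (by ring)

variable {M : Observable} {a b : Fin 4 → Zα}

lemma HasResidues.Sg_smul (h : HasResidues n M a b) :
    HasResidues n (Sg • M) ![a 0, a 3, a 1, a 2] ![b 0, b 3, b 1, b 2] := by
  intro k
  rw [pauliCoord_Sg_smul]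
  fin_cases k
  exacts [h 0, h 3, h 1, h 2]

lemma HasResidues.Xg_smul (h : HasResidues n M a b) : HasResidues n (Xg • M) a b := by
  intro k
  rw [pauliCoord_Xg_smul]
  fin_cases k
  · exact (h 0).zeta_pow_three_mul
  · simpa using h 1
  · exact (h 2).zeta_pow_three_mul
  · have h₃ := (h 3).zeta_pow_three_mul.zeta_pow_three_mul
    rwa [← mul_assoc] at h₃

lemma HasResidues.Hg_smul (h : HasResidues n M a b) :
    HasResidues n (Hg • M) ![a 1, a 0, a 3, a 2] ![b 1, -b 0, b 3, -b 2] := by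
  intro k
  rw [pauliCoord_Hg_smul]
  fin_cases k
  exacts [h 1, (h 0).star, (h 3).zeta_pow_three_mul.zeta_pow_three_mul, (h 2).star]

lemma HasResidues.Hg_sq_smul (h : HasResidues n M a b) : HasResidues n (Hg ^ 2 • M) a (-b) := by
  intro k
  have hk := h.Hg_smul.Hg_smul k
  rw [sq, mul_smul]
  fin_cases k <;> simpa using hk

lemma exists_hasResidues_smul_of_mem_cliffordBorel {P : (Fin 4 → Zα) → (Fin 4 → Zα) → Prop}
    (hS : ∀ a b, P a b → P ![a 0, a 3, a 1, a 2] ![b 0, b 3, b 1, b 2])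
    (hneg : ∀ a b, P a b → P a (-b)) {g : GL (Fin 3) ℂ} (hg : g ∈ cliffordBorel)
    (h : HasResidues n M a b) (hP : P a b) : ∃ a' b', HasResidues n (g • M) a' b' ∧ P a' b' := by
  refine closure_induction_left_of_isOfFinOrder
    (p := fun g => ∃ a' b', HasResidues n (g • M) a' b' ∧ P a' b') ?_
    ⟨a, b, by rwa [one_smul], hP⟩ ?_ hg
  · rintro x (rfl | rfl | rfl)
    exacts [isOfFinOrder_Sg, isOfFinOrder_Xg, isOfFinOrder_Hg.pow]
  · rintro x (rfl | rfl | rfl) y ⟨a', b', h', hP'⟩ <;> rw [mul_smul]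
    exacts [⟨_, _, h'.Sg_smul, hS _ _ hP'⟩, ⟨_, _, h'.Xg_smul, hP'⟩,
      ⟨_, _, h'.Hg_sq_smul, hneg _ _ hP'⟩]

lemma exists_perm_hasResidues_smul {g : GL (Fin 3) ℂ} (hg : g ∈ Cliff) :
    ∃ (σ : Equiv.Perm (Fin 4)) (ε : Fin 4 → Zα), ∀ n M a b,
      HasResidues n M a b → HasResidues n (g • M) (a ∘ σ) (ε * b ∘ σ) := by
  refine closure_induction_left_of_isOfFinOrder
    (p := fun g => ∃ (σ : Equiv.Perm (Fin 4)) (ε : Fin 4 → Zα), ∀ n M a b,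
      HasResidues n M a b → HasResidues n (g • M) (a ∘ σ) (ε * b ∘ σ)) ?_ ?_ ?_ hg
  · rintro x (rfl | rfl)
    exacts [isOfFinOrder_Hg, isOfFinOrder_Sg]
  · exact ⟨1, 1, fun n M a b h => by simpa using h⟩
  · rintro x (rfl | rfl) y ⟨σ, ε, ih⟩
    · refine ⟨σ * ⟨![1, 0, 3, 2], ![1, 0, 3, 2], by decide, by decide⟩,
        ![ε 1, -ε 0, ε 3, -ε 2], fun n M a b h => ?_⟩
      rw [mul_smul]
      convert (ih n M a b h).Hg_smul using 1 <;> funext k <;> fin_cases k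
      exacts [rfl, rfl, rfl, rfl, rfl, neg_mul _ _, rfl, neg_mul _ _]
    · refine ⟨σ * ⟨![0, 3, 1, 2], ![0, 2, 3, 1], by decide, by decide⟩,
        ![ε 0, ε 3, ε 1, ε 2], fun n M a b h => ?_⟩
      rw [mul_smul]
      convert (ih n M a b h).Sg_smul using 1 <;> funext k <;> fin_cases k <;> rfl

end Residues

section ResidueConditions

/-- The conditions on residues under which a `T` gate raises the denominator exponent by exactly
`2`, with `r` the residue of the new leading terms up to a unit. The indices `1`, `2`, `3` are
permuted cyclically by `S`. -/
structure PreT (r : Zα) (a b : Fin 4 → Zα) : Prop where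
  re_sum : alpha ∣ a 1 + a 2 + a 3 - r
  im_sum : alpha ^ 3 ∣ b 1 + b 2 + b 3
  im_diff (k : Fin 3) : alpha ∣ b (k + 1).succ - b k.succ - b 0

/-- The conditions on residues produced by a `T` gate. -/
structure PostT (r : Zα) (a b : Fin 4 → Zα) : Prop where
  re_zero : alpha ∣ a 0
  re_succ (k : Fin 3) : alpha ∣ a k.succ - r
  im_zero : alpha ∣ b 0
  im_diff (k : Fin 3) : alpha ^ 3 ∣ b (k + 1).succ - b k.succ - b 0

variable {r : Zα} {a b x y : Fin 4 → Zα}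

lemma PreT.rotate (h : PreT r a b) :
    PreT r ![a 0, a 3, a 1, a 2] ![b 0, b 3, b 1, b 2] where
  re_sum := by simpa [add_assoc, add_comm, add_left_comm] using h.re_sum
  im_sum := by simpa [add_assoc, add_comm, add_left_comm] using h.im_sum
  im_diff k := by
    fin_cases k
    exacts [h.im_diff 2, h.im_diff 0, h.im_diff 1]

lemma PostT.rotate (h : PostT r a b) :
    PostT r ![a 0, a 3, a 1, a 2] ![b 0, b 3, b 1, b 2] where
  re_zero := h.re_zero
  re_succ k := by
    fin_cases k
    exacts [h.re_succ 2, h.re_succ 0, h.re_succ 1]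
  im_zero := h.im_zero
  im_diff k := by
    fin_cases k
    exacts [h.im_diff 2, h.im_diff 0, h.im_diff 1]

lemma PreT.neg_im (h : PreT r a b) : PreT r a (-b) where
  re_sum := h.re_sum
  im_sum := (dvd_neg.2 h.im_sum).trans (dvd_of_eq (by simp only [Pi.neg_apply]; ring))
  im_diff k := (dvd_neg.2 (h.im_diff k)).trans (dvd_of_eq (by simp only [Pi.neg_apply]; ring))

lemma PostT.neg_im (h : PostT r a b) : PostT r a (-b) where
  re_zero := h.re_zero
  re_succ := h.re_succ
  im_zero := dvd_neg.2 h.im_zero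
  im_diff k := (dvd_neg.2 (h.im_diff k)).trans (dvd_of_eq (by simp only [Pi.neg_apply]; ring))

lemma alpha_dvd_three : alpha ∣ 3 := (dvd_pow_self alpha (by simp)).trans alpha_pow_six_dvd_three

lemma PostT.preT_hadamard (h : PostT r a b) :
    PreT (2 * r) ![a 1, a 0, a 3, a 2] ![b 1, -b 0, b 3, -b 2] where
  re_sum := by
    have hsum := dvd_add (dvd_add h.re_zero (h.re_succ 2)) (h.re_succ 1)
    refine hsum.trans (dvd_of_eq ?_)
    change a 0 + (a 3 - r) + (a 2 - r) = a 0 + a 3 + a 2 - 2 * r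
    ring
  im_sum := by
    refine (h.im_diff 1).trans (dvd_of_eq ?_)
    change b 3 - b 2 - b 0 = -b 0 + b 3 + -b 2
    ring
  im_diff k := by
    have hdiff (k : Fin 3) : alpha ∣ b (k + 1).succ - b k.succ - b 0 :=
      (dvd_pow_self alpha three_ne_zero).trans (h.im_diff k)
    fin_cases k
    · refine (dvd_neg.2 (hdiff 2)).trans (dvd_of_eq ?_)
      change -(b 1 - b 3 - b 0) = b 3 - -b 0 - b 1
      ring
    · have hthree : alpha ∣ -(3 * b 2) := dvd_neg.2 (alpha_dvd_three.mul_right _)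
      refine (dvd_add hthree (dvd_sub (hdiff 0) (hdiff 1))).trans (dvd_of_eq ?_)
      change -(3 * b 2) + (b 2 - b 1 - b 0 - (b 3 - b 2 - b 0)) = -b 2 - b 3 - b 1
      ring
    · refine (hdiff 0).trans (dvd_of_eq ?_)
      change b 2 - b 1 - b 0 = -b 0 - -b 2 - b 1
      ring

lemma PreT.congr (h : PreT r a b) (hx : ∀ k, alpha ∣ x k - a k)
    (hy : ∀ k, alpha ^ 3 ∣ y k - b k) : PreT r x y where
  re_sum := by
    have := dvd_add (dvd_add (dvd_add (hx 1) (hx 2)) (hx 3)) h.re_sum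
    exact this.trans (dvd_of_eq (by ring))
  im_sum := by
    have := dvd_add (dvd_add (dvd_add (hy 1) (hy 2)) (hy 3)) h.im_sum
    exact this.trans (dvd_of_eq (by ring))
  im_diff k := by
    have hy' (k) : alpha ∣ y k - b k := (dvd_pow_self alpha three_ne_zero).trans (hy k)
    have := dvd_add (dvd_sub (dvd_sub (hy' (k + 1).succ) (hy' k.succ)) (hy' 0)) (h.im_diff k)
    exact this.trans (dvd_of_eq (by ring))

end ResidueConditions

section TGate

variable {n : ℕ} {z : ℂ} {r : Zα} {a b x y : Fin 4 → Zα} {M : Observable}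

lemma IsNumerator.raise {x y : Zα} (h : IsNumerator n z x y) :
    IsNumerator (n + 1) z (alpha ^ 2 * x) (alpha ^ 2 * y) where
  re := by
    push_cast
    rw [coe_alpha, ← h.re]
    ring
  im := by
    push_cast
    rw [coe_alpha, ← h.im]
    ring

lemma HasResidues.exists_preT_numerators (h : HasResidues n M a b) (hr : PreT r a b) :
    ∃ x y, (∀ k, IsNumerator n (pauliCoord M k) (x k) (y k)) ∧ PreT r x y := by
  choose x y hx hy hxy using h
  exact ⟨x, y, hxy, hr.congr hx hy⟩

/-- The level goes up by only one because the imaginary numerator of the sum is divisible by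
`α³`. -/
lemma exists_isNumerator_sum_of_preT (h : ∀ k, IsNumerator n (pauliCoord M k) (x k) (y k))
    (hr : PreT r x y) :
    ∃ s t, alpha ∣ s - -lam * r ∧
      IsNumerator (n + 1) (ζ ^ 8 * (-(1 + 2 * ζ ^ 3) / 3) *
        (pauliCoord M 1 + pauliCoord M 2 + pauliCoord M 3)) s t := by
  obtain ⟨t, ht⟩ := hr.im_sum
  obtain ⟨d, hd⟩ := hr.re_sum
  have hsum := isNumerator_zeta_pow_eight_div.mul (((h 1).add (h 2)).add (h 3))
    (q := -lam * cosAngle * alpha * t) (by rw [ht]; ring)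
  rw [add_comm 1 n] at hsum
  exact ⟨_, _, ⟨-lam * d + lam * cosAngle * t, by linear_combination -lam * hd⟩, hsum⟩

lemma exists_isNumerator_pair_of_preT (h : ∀ k, IsNumerator n (pauliCoord M k) (x k) (y k))
    (hr : PreT r x y) :
    ∃ u v : Fin 3 → Zα,
      (∀ k, IsNumerator (n + 1) (-ζ ^ 5 * (pauliCoord M k.succ + pauliCoord M (k + 1).succ))
        (alpha ^ 2 * u k) (alpha ^ 2 * v k)) ∧
      ∀ k, alpha ∣ v (k + 1) - v k - y 0 := by
  obtain ⟨p, q, ⟨f, hf⟩, hpq⟩ := exists_isNumerator_neg_zeta_pow_five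
  obtain ⟨e, he⟩ := alpha_dvd_three
  have hpair (k : Fin 3) := (hpq.mul ((h k.succ).add (h (k + 1).succ))
    (q := q * (y k.succ + y (k + 1).succ)) (by ring)).raise
  simp only [zero_add] at hpair
  refine ⟨_, _, hpair, fun k => ?_⟩
  obtain ⟨d₁, h₁⟩ := hr.im_diff k
  obtain ⟨d₂, h₂⟩ := hr.im_diff (k + 1)
  refine ⟨f * (y (k + 1 + 1).succ - y k.succ) - d₁ - d₂ - e * y 0 +
    alpha * q * (x (k + 1 + 1).succ - x k.succ), ?_⟩
  linear_combination (y (k + 1 + 1).succ - y k.succ) * hf - h₁ - h₂ - y 0 * he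

lemma exists_hasResidues_Tg_smul_of_preT (h : HasResidues n M a b) (hr : PreT r a b) :
    ∃ a' b', HasResidues (n + 1) (Tg • M) a' b' ∧ PostT (-lam * r) a' b' := by
  obtain ⟨x, y, hxy, hr⟩ := h.exists_preT_numerators hr
  obtain ⟨s, t, hs, hst⟩ := exists_isNumerator_sum_of_preT hxy hr
  obtain ⟨u, v, huv, hv⟩ := exists_isNumerator_pair_of_preT hxy hr
  refine ⟨Fin.cons (alpha ^ 2 * x 0) fun k => s + alpha ^ 2 * u k,
    Fin.cons (alpha ^ 2 * y 0) fun k => t + alpha ^ 2 * v k, fun k => ?_,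
    ?_, fun k => ?_, ?_, fun k => ?_⟩
  · cases k using Fin.cases with
    | zero =>
      rw [pauliCoord_Tg_smul_zero]
      exact (hxy 0).raise.isResidue
    | succ k =>
      rw [pauliCoord_Tg_smul_succ]
      exact (hst.add (huv k)).isResidue
  · exact ((dvd_pow_self alpha two_ne_zero).mul_right _)
  · simp only [Fin.cons_succ]
    rw [add_sub_right_comm]
    exact dvd_add hs ((dvd_pow_self alpha two_ne_zero).mul_right _)
  · exact ((dvd_pow_self alpha two_ne_zero).mul_right _)
  · simp only [Fin.cons_succ, Fin.cons_zero]
    refine (mul_dvd_mul_left (alpha ^ 2) (hv k)).trans (dvd_of_eq ?_)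
    ring

end TGate

section LeastDenominatorExponent

variable {m n : ℕ} {r : Zα} {M : Observable}

/-- The multiple `P_j + P_j†` of `Q_j`, for the `j`-th Pauli matrix `P_j`. -/
def pauliObservable (j : Fin 4) : Observable :=
  ⟨pauli j + star (pauli j), IsSelfAdjoint.add_star_self _⟩

lemma coe_pauliObservable (j : Fin 4) : (pauliObservable j).1 = pauli j + star (pauli j) := rfl

lemma pauliCoord_pauliObservable (j : Fin 4) :
    pauliCoord (pauliObservable j) = Pi.single j 1 := by
  funext k
  rw [pauliCoord, coe_pauliObservable, pauli_eq, div_eq_iff three_ne_zero, star_eq_conjTranspose]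
  fin_cases j <;> fin_cases k <;>
    simp only [Fin.zero_eta, Fin.mk_one, Fin.reduceFinMk, cons_val, conjTranspose_fin_three,
      mul_add, mul_fin_three, trace_add, trace_fin_three, star_pow, star_zeta, star_zero, star_one,
      of_apply, Pi.single_apply, Fin.reduceEq, if_true, if_false] <;>
    grind [zeta_pow_nine, zeta_cyclotomic]

lemma hasResidues_pauliObservable (j : Fin 4) :
    HasResidues 0 (pauliObservable j) (Pi.single j 1) 0 := by
  intro k
  have h : IsNumerator 0 ((Pi.single j 1 : Fin 4 → ℂ) k) ((Pi.single j 1 : Fin 4 → Zα) k) 0 := by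
    rcases eq_or_ne k j with rfl | hkj <;> constructor <;> simp [*]
  rw [pauliCoord_pauliObservable]
  exact h.isResidue

/-- At level `n`, the observable `M` has residues of the kind that a `T` gate produces. -/
def HasPostT (n : ℕ) (r : Zα) (M : Observable) : Prop :=
  ∃ a b, HasResidues n M a b ∧ PostT r a b

lemma HasPostT.Tg_mul_smul {c : GL (Fin 3) ℂ}
    (hc : c ∈ DoubleCoset.doubleCoset Hg (cliffordBorel : Set (GL (Fin 3) ℂ)) cliffordBorel)
    (h : HasPostT n r M) : HasPostT (n + 1) (-lam * (2 * r)) ((Tg * c) • M) := by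
  obtain ⟨b₁, hb₁, b₂, hb₂, rfl⟩ := DoubleCoset.mem_doubleCoset.1 hc
  obtain ⟨a, b, hM, hab⟩ := h
  obtain ⟨a, b, hM, hab⟩ := exists_hasResidues_smul_of_mem_cliffordBorel (P := PostT r)
    (fun _ _ => PostT.rotate) (fun _ _ => PostT.neg_im) hb₂ hM hab
  obtain ⟨a, b, hM, hab⟩ := exists_hasResidues_smul_of_mem_cliffordBorel (P := PreT (2 * r))
    (fun _ _ => PreT.rotate) (fun _ _ => PreT.neg_im) hb₁ hM.Hg_smul hab.preT_hadamard
  rw [mul_smul, mul_smul, mul_smul]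
  exact exists_hasResidues_Tg_smul_of_preT hM hab

lemma exists_hasPostT_Tg_mul_smul_pauliObservable {c : GL (Fin 3) ℂ} (hc : c ∈ Cliff) :
    ∃ r : Fin 4 → Zα, (∀ j, HasPostT 1 (r j) ((Tg * c) • pauliObservable j)) ∧
      ∃ j, ¬ alpha ∣ r j := by
  obtain ⟨σ, ε, hσ⟩ := exists_perm_hasResidues_smul hc
  set a : Fin 4 → Fin 4 → Zα := fun j => Pi.single j 1 ∘ σ with ha
  refine ⟨fun j => -lam * (a j 1 + a j 2 + a j 3), fun j => ?_, σ 1, ?_⟩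
  · rw [mul_smul]
    have hres := hσ _ _ _ _ (hasResidues_pauliObservable j)
    exact exists_hasResidues_Tg_smul_of_preT hres
      ⟨by rw [sub_self]; exact dvd_zero _, by simp, by simp⟩
  · rw [isUnit_lam.neg.dvd_mul_left]
    simpa [ha, Pi.single_apply] using not_alpha_dvd_one

lemma IsReducedProduct.exists_hasPostT {u : GL (Fin 3) ℂ}
    (hu : IsReducedProduct cliffordBorel Cliff Tg m u) (hm : m ≠ 0) :
    ∃ r : Fin 4 → Zα, (∀ j, HasPostT m (r j) (u • pauliObservable j)) ∧
      ∃ j, ¬ alpha ∣ r j := by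
  induction hu with
  | one => exact absurd rfl hm
  | @step m c u hc hcB hu ih =>
    rcases eq_or_ne m 0 with rfl | hm
    · cases hu
      rw [mul_one]
      exact exists_hasPostT_Tg_mul_smul_pauliObservable hc
    · obtain ⟨r, hr, j, hj⟩ := ih hm
      have hcH := (Cliff_subset_union_doubleCoset hc).resolve_left (hcB hm)
      refine ⟨fun j => -lam * (2 * r j), fun j => ?_, j, ?_⟩
      · rw [← mul_assoc, mul_smul]
        exact (hr j).Tg_mul_smul hcH
      · rwa [isUnit_lam.neg.dvd_mul_left, isUnit_two.dvd_mul_left]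

lemma IsReducedProduct.exists_hasResidues {u : GL (Fin 3) ℂ}
    (hu : IsReducedProduct cliffordBorel Cliff Tg m u) :
    ∃ a b : Fin 4 → Fin 4 → Zα, (∀ j, HasResidues m (u • pauliObservable j) (a j) (b j)) ∧
      ∃ j k, ¬ alpha ∣ a j k := by
  cases hu with
  | one =>
    refine ⟨fun j => Pi.single j 1, fun _ => 0, fun j => ?_, 0, 0, ?_⟩
    · rw [one_smul]
      exact hasResidues_pauliObservable j
    · simpa using not_alpha_dvd_one
  | step hc hcB hu =>
    obtain ⟨r, hr, j, hj⟩ := (IsReducedProduct.step hc hcB hu).exists_hasPostT (Nat.succ_ne_zero _)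
    choose a b hres hpost using hr
    exact ⟨a, b, hres, j, 1, fun h => hj ((dvd_sub_right h).1 ((hpost j).re_succ 0))⟩

lemma HasNormalForm.exists_hasResidues {g : GL (Fin 3) ℂ}
    (hg : HasNormalForm cliffordBorel Cliff Tg m g) :
    ∃ a b : Fin 4 → Fin 4 → Zα, (∀ j, HasResidues m (g • pauliObservable j) (a j) (b j)) ∧
      ∃ j k, ¬ alpha ∣ a j k := by
  obtain ⟨c, hc, u, hu, rfl⟩ := hg
  obtain ⟨σ, ε, hσ⟩ := exists_perm_hasResidues_smul hc
  obtain ⟨a, b, hres, j, k, hjk⟩ := hu.exists_hasResidues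
  refine ⟨fun j => a j ∘ σ, fun j => ε * b j ∘ σ, fun j => ?_, j, σ.symm k, ?_⟩
  · rw [mul_smul]
    exact hσ _ _ _ _ (hres j)
  · simpa using hjk

lemma pauli_sq (j : Fin 4) : pauli j ^ 2 = star (pauli j) := by
  rw [pauli_eq, sq, star_eq_conjTranspose]
  fin_cases j <;>
    simp only [Fin.zero_eta, Fin.mk_one, Fin.reduceFinMk, cons_val, mul_fin_three,
      conjTranspose_fin_three, star_pow, star_zeta, star_zero, star_one] <;>
    congrm !![?_, ?_, ?_; ?_, ?_, ?_; ?_, ?_, ?_] <;> grind [zeta_pow_nine]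

lemma Q_eq_smul_pauliObservable (j : Fin 4) :
    Q ⟨j, by omega⟩ = (√6 : ℂ)⁻¹ • (pauliObservable j).1 := by
  rw [coe_pauliObservable, ← pauli_sq]
  fin_cases j <;> rfl

lemma blockPP_adj (U : GL (Fin 3) ℂ) (i j : Fin 4) :
    blockPP (adj U) i j = (pauliCoord (U • pauliObservable j) i).re := by
  set N := U • pauliObservable j
  have hsix : (√6 : ℂ)⁻¹ * (√6 : ℂ)⁻¹ = (1 / 6 : ℝ) := by
    rw [← mul_inv, ← Complex.ofReal_mul, Real.mul_self_sqrt (by norm_num)]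
    norm_num
  have htrace : trace ((pauliObservable i).1 * N.1) = 3 * (2 * (pauliCoord N i).re : ℝ) := by
    rw [← add_conj, ← star_def, star_pauliCoord, pauliCoord, coe_pauliObservable, add_mul,
      trace_add, star_eq_conjTranspose]
    ring
  calc blockPP (adj U) i j
      = (trace ((√6 : ℂ)⁻¹ • (pauliObservable i).1 * U.1 *
          ((√6 : ℂ)⁻¹ • (pauliObservable j).1) * U.1ᴴ)).re := by
        rw [← Q_eq_smul_pauliObservable, ← Q_eq_smul_pauliObservable]
        rfl
    _ = ((1 / 6 : ℝ) * trace ((pauliObservable i).1 * N.1)).re := by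
        rw [← hsix, coe_smul_observable]
        simp only [Matrix.smul_mul, Matrix.mul_smul, smul_smul, mul_assoc, trace_smul, smul_eq_mul]
    _ = (pauliCoord N i).re := by
        rw [htrace, re_ofReal_mul, ← ofReal_ofNat, re_ofReal_mul, ofReal_re]
        ring

lemma HasNormalForm.isLeast_denominator_exponent {U : GL (Fin 3) ℂ}
    (hU : HasNormalForm cliffordBorel Cliff Tg m U) :
    IsLeast {k : ℕ | ∀ i j : Fin 4, αR ^ k * blockPP (adj U) i j ∈ Zα} (2 * m) := by
  obtain ⟨a, b, hres, j, i, hij⟩ := hU.exists_hasResidues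
  simp only [blockPP_adj]
  refine ⟨fun i j => ?_, fun k hk => ?_⟩
  · obtain ⟨x, y, -, -, h⟩ := hres j i
    exact h.re ▸ x.2
  · by_contra! hlt
    obtain ⟨x, y, hxa, -, h⟩ := hres j i
    obtain ⟨d, hd⟩ := Nat.exists_eq_add_of_lt hlt
    refine hij ((dvd_sub_right ?_).1 hxa)
    refine ⟨alpha ^ d * ⟨_, hk i j⟩, Subtype.ext ?_⟩
    push_cast
    rw [← h.re, hd, coe_alpha]
    ring

end LeastDenominatorExponent

/-- For every element U of the Clifford+T group, the minimum number
of occurrences of the letter T over all words in the alphabet {H, S, T} whose product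
equals U is exactly half the least denominator exponent of Û₊₊ (in particular, this
least denominator exponent is even). -/
theorem min_T_count_is_half_LDE :
    ∀ U : GL (Fin 3) ℂ, U ∈ CliffT → ∃ n : ℕ,
      IsLeast {k : ℕ | ∃ w : List Letter, wordProd w = U ∧ w.count Letter.T = k} n ∧
      IsLeast {k : ℕ | ∀ i j : Fin 4,
        αR ^ k * blockPP (adj (U : Matrix (Fin 3) (Fin 3) ℂ)) i j ∈ Zα} (2 * n) := by
  intro U hU
  obtain ⟨w, hw⟩ := exists_wordProd_eq_of_mem_CliffT hU
  obtain ⟨m, -, hm⟩ := exists_hasNormalForm_wordProd w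
  rw [hw] at hm
  have hLDE := hm.isLeast_denominator_exponent
  refine ⟨m, ⟨hm.exists_wordProd_eq, ?_⟩, hLDE⟩
  rintro k ⟨v, hv, rfl⟩
  obtain ⟨n, hn, hnv⟩ := exists_hasNormalForm_wordProd v
  rw [hv] at hnv
  have hmn := hLDE.unique hnv.isLeast_denominator_exponent
  lia

end
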